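/- arXiv:0708.0480 — 6 statements merged into one kernel-verified Lean document; each statement's English description precedes it below -/
import Mathlib

section
/- Let A be a commutative Noetherian ring and r > 0 an integer. Assume that for every n ≥ 0, every finitely generated projective module of rank r over the polynomial ring A[X_1,…,X_n] is extended from A. Then every finitely generated projective module of rank r over any discrete Hodge A-algebra is extended from A. -/
/-!
Statement 0 (Theorem 1.1 / k1): Let `A` be a commutative Noetherian ring and `r > 0`.
If all finitely generated projective modules of rank `r` over all polynomial extensions
`A[X_1,…,X_n]` are extended from `A`, then all finitely generated projective modules of
rank `r` over any discrete Hodge `A`-algebra are extended from `A`.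
-/

universe u

open TensorProduct

/-- A finitely generated projective module `P` over an `A`-algebra `B` is *extended from `A`*
if there is a finitely generated projective `A`-module `Q` with `P ≅ B ⊗[A] Q`. -/
def IsExtendedFrom (A : Type u) (B : Type u) [CommRing A] [CommRing B] [Algebra A B]
    (P : Type u) [AddCommGroup P] [Module B P] : Prop :=
  ∃ (Q : Type u) (_ : AddCommGroup Q) (_ : Module A Q),
    Module.Finite A Q ∧ Module.Projective A Q ∧ Nonempty (P ≃ₗ[B] B ⊗[A] Q)

/-- A module `P` over a commutative ring `B` has (constant) rank `r` if its localization at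
every prime of `B` has rank `r`. -/
def HasRank (B : Type u) [CommRing B] (P : Type u) [AddCommGroup P] [Module B P]
    (r : ℕ) : Prop :=
  ∀ 𝔭 : PrimeSpectrum B,
    Module.finrank (Localization.AtPrime 𝔭.asIdeal)
      (LocalizedModule 𝔭.asIdeal.primeCompl P) = r

/-- An ideal of `A[X_0,…,X_{n-1}]` is a monomial ideal if it is generated by (nonconstant)
monomials in the variables. -/
def IsMonomialIdeal {A : Type u} [CommRing A] {n : ℕ}
    (I : Ideal (MvPolynomial (Fin n) A)) : Prop :=
  ∃ S : Set (MvPolynomial (Fin n) A),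
    (∀ p ∈ S, ∃ s : Fin n →₀ ℕ, s ≠ 0 ∧ p = MvPolynomial.monomial s 1) ∧ I = Ideal.span S

/-- `B` is a discrete Hodge `A`-algebra if `B ≅ A[X_0,…,X_n]/I` for some ideal `I`
generated by monomials. -/
def IsDiscreteHodgeAlgebra (A : Type u) (B : Type u) [CommRing A] [CommRing B]
    [Algebra A B] : Prop :=
  ∃ (n : ℕ) (I : Ideal (MvPolynomial (Fin (n + 1)) A)), IsMonomialIdeal I ∧
    Nonempty ((MvPolynomial (Fin (n + 1)) A ⧸ I) ≃ₐ[A] B)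


open Function in
lemma hodge_pull {K N N1 N2 N12 M : Type*} [CommRing K] [AddCommGroup N] [AddCommGroup N1]
    [AddCommGroup N2] [AddCommGroup N12] [AddCommGroup M] [Module K N] [Module K N1]
    [Module K N2] [Module K N12] [Module K M] [Module.Flat K M]
    (f1 : N →ₗ[K] N1) (f2 : N →ₗ[K] N2) (g1 : N1 →ₗ[K] N12) (g2 : N2 →ₗ[K] N12)
    (hcomm : ∀ x, g1 (f1 x) = g2 (f2 x))
    (hinj : ∀ x, f1 x = 0 → f2 x = 0 → x = 0)
    (hex : ∀ x y, g1 x = g2 y → ∃ z, f1 z = x ∧ f2 z = y) :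
    (∀ x, f1.rTensor M x = 0 → f2.rTensor M x = 0 → x = 0) ∧
    (∀ x y, g1.rTensor M x = g2.rTensor M y →
      ∃ z, f1.rTensor M z = x ∧ f2.rTensor M z = y) := by
  let F : N →ₗ[K] N1 × N2 := f1.prod f2
  let G : N1 × N2 →ₗ[K] N12 := g1.coprod (-g2)
  have hF : Injective F := by
    rw [injective_iff_map_eq_zero]
    intro x hx
    exact hinj x (congrArg Prod.fst hx) (congrArg Prod.snd hx)
  have hFG : Exact F G := by
    rintro ⟨x, y⟩
    constructor
    · intro h
      have h' : g1 x = g2 y := by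
        simpa [G, ← sub_eq_add_neg, sub_eq_zero] using h
      obtain ⟨z, hz1, hz2⟩ := hex x y h'
      exact ⟨z, Prod.ext hz1 hz2⟩
    · rintro ⟨z, hz⟩
      rw [← hz]
      simp [F, G, hcomm]
  have hF' := Module.Flat.rTensor_preserves_injective_linearMap (M := M) F hF
  have hFG' := Module.Flat.rTensor_exact M hFG
  have e1 : ∀ x : N ⊗[K] M, TensorProduct.prodLeft K K N1 N2 M (F.rTensor M x) =
      (f1.rTensor M x, f2.rTensor M x) := by
    intro x
    induction x with
    | zero => simp only [map_zero]; rfl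
    | tmul a b => simp [F]
    | add a b ha hb => simp only [map_add, ha, hb, Prod.mk_add_mk]
  have e2 : ∀ x : (N1 × N2) ⊗[K] M, G.rTensor M x =
      g1.rTensor M (TensorProduct.prodLeft K K N1 N2 M x).1 -
      g2.rTensor M (TensorProduct.prodLeft K K N1 N2 M x).2 := by
    intro x
    induction x with
    | zero => simp
    | tmul a b =>
      obtain ⟨a1, a2⟩ := a
      simp [G, TensorProduct.add_tmul, TensorProduct.neg_tmul, sub_eq_add_neg]
    | add a b ha hb => simp only [map_add, ha, hb, Prod.fst_add, Prod.snd_add]; abel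
  constructor
  · intro x h1 h2
    apply hF'
    apply (TensorProduct.prodLeft K K N1 N2 M).injective
    rw [e1, h1, h2]
    simp
  · intro x y h
    obtain ⟨z, hz⟩ := (hFG' ((TensorProduct.prodLeft K K N1 N2 M).symm (x, y))).1 (by
      rw [e2]; simp [h])
    have := e1 z
    rw [hz, LinearEquiv.apply_symm_apply] at this
    exact ⟨z, (congrArg Prod.fst this).symm, (congrArg Prod.snd this).symm⟩

lemma hodge_rTensor_smul {K C D M : Type*} [CommRing K] [CommRing C] [CommRing D] [AddCommGroup M]
    [Module K M] [Algebra K C] [Algebra K D] (g : C →ₐ[K] D) (c : C) (x : C ⊗[K] M) :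
    g.toLinearMap.rTensor M (c • x) = g c • g.toLinearMap.rTensor M x := by
  induction x with
  | zero => simp
  | tmul a b => simp [TensorProduct.smul_tmul']
  | add a b ha hb => simp only [smul_add, map_add, ha, hb]

lemma hodge_transport {K1 K2 C D P Q : Type*} [CommRing K1] [CommRing K2] [CommRing C]
    [CommRing D] [AddCommGroup P] [AddCommGroup Q] [Module K1 P] [Module K2 Q]
    [Algebra K1 C] [Algebra K2 C] [Algebra K1 D] [Algebra K2 D]
    (g1 : C →ₐ[K1] D) (g2 : C →ₐ[K2] D) (hg : ∀ c, g1 c = g2 c)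
    (α : C ⊗[K1] P ≃ₗ[C] C ⊗[K2] Q) :
    ∃ β : D ⊗[K1] P ≃ₗ[D] D ⊗[K2] Q,
      ∀ x, β (g1.toLinearMap.rTensor P x) = g2.toLinearMap.rTensor Q (α x) := by
  let : Algebra C D := g1.toRingHom.toAlgebra
  have : IsScalarTower K1 C D := IsScalarTower.of_algebraMap_eq' g1.comp_algebraMap.symm
  have : IsScalarTower K2 C D := IsScalarTower.of_algebraMap_eq fun k => by
    change _ = g1 _
    rw [hg, g2.commutes]
  let e1 := TensorProduct.AlgebraTensorModule.cancelBaseChange K1 C D D P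
  let e2 := TensorProduct.AlgebraTensorModule.cancelBaseChange K2 C D D Q
  have k1 : ∀ x, e1 (1 ⊗ₜ x) = g1.toLinearMap.rTensor P x := by
    intro x
    induction x with
    | zero => simp
    | tmul a b =>
      simp only [e1, TensorProduct.AlgebraTensorModule.cancelBaseChange_tmul, Algebra.smul_def,
        mul_one, LinearMap.rTensor_tmul]
      rfl
    | add a b ha hb => simp only [TensorProduct.tmul_add, map_add, ha, hb]
  have k2 : ∀ x, e2 (1 ⊗ₜ x) = g2.toLinearMap.rTensor Q x := by
    intro x
    induction x with
    | zero => simp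
    | tmul a b =>
      simp only [e2, TensorProduct.AlgebraTensorModule.cancelBaseChange_tmul, Algebra.smul_def,
        mul_one, LinearMap.rTensor_tmul, AlgHom.toLinearMap_apply, ← hg]
      rfl
    | add a b ha hb => simp only [TensorProduct.tmul_add, map_add, ha, hb]
  refine ⟨e1.symm.trans ((LinearEquiv.baseChange C D _ _ α).trans e2), fun x => ?_⟩
  rw [← k1, ← k2]
  simp

/-- All f.g. projective `B`-modules of rank `r` are extended from `A`. -/
def HodgeExt (A : Type u) [CommRing A] (r : ℕ) (B : Type u) [CommRing B] [Algebra A B] : Prop :=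
  ∀ (P : Type u) [AddCommGroup P] [Module B P] [Module.Finite B P] [Module.Projective B P],
    HasRank B P r → IsExtendedFrom A B P

lemma HasRank.hodge_baseChange {B C : Type u} [CommRing B] [CommRing C] [Algebra B C]
    (P : Type u) [AddCommGroup P] [Module B P] [Module.Finite B P] [Module.Projective B P]
    {r : ℕ} (h : HasRank B P r) : HasRank C (C ⊗[B] P) r := by
  intro p
  have := Module.rankAtStalk_baseChange (R := B) (M := P) p
  exact this.trans (h _)

lemma HodgeExt.retract {A R B : Type u} [CommRing A] [CommRing R] [CommRing B] [Algebra A R]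
    [Algebra A B] {r : ℕ} (s : B →ₐ[A] R) (p : R →ₐ[A] B) (hps : ∀ b, p (s b) = b)
    (h : HodgeExt A r R) : HodgeExt A r B := by
  intro P _ _ _ _ hP
  let : Algebra B R := s.toRingHom.toAlgebra
  obtain ⟨Q, _, _, hQ1, hQ2, ⟨α⟩⟩ := h (R ⊗[B] P) (hP.hodge_baseChange P)
  let g : R →ₐ[B] B := { p.toRingHom with commutes' := hps }
  obtain ⟨β, -⟩ := hodge_transport g p (fun _ => rfl) α
  exact ⟨Q, _, _, hQ1, hQ2, ⟨(TensorProduct.lid B P).symm.trans β⟩⟩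

lemma hodge_surj {K B B' X M : Type*} [CommRing K] [CommRing B] [CommRing B'] [Algebra K B]
    [Algebra K B'] [AddCommGroup M] [Module K M] [Module.Finite K M] (g : B →ₐ[K] B')
    (hg : Function.Surjective g) (hnil : ∀ b, g b = 0 → IsNilpotent b)
    [AddCommGroup X] [Module B X] (f : X →ₗ[B] B ⊗[K] M)
    (hf : ∀ y, ∃ x, g.toLinearMap.rTensor M (f x) = y) : Function.Surjective f := by
  rw [← LinearMap.range_eq_top, ← top_le_iff]
  refine Submodule.le_of_le_smul_of_le_jacobson_bot (I := RingHom.ker g) Module.Finite.fg_top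
    ?_ ?_
  · intro b hb
    exact Ideal.radical_le_jacobson (mem_nilradical.2 (hnil b hb))
  · intro y _
    obtain ⟨x, hx⟩ := hf (g.toLinearMap.rTensor M y)
    rw [← sub_add_cancel y (f x), add_comm]
    refine Submodule.add_mem_sup ⟨x, rfl⟩ ?_
    have hz : g.toLinearMap.rTensor M (y - f x) = 0 := by rw [map_sub, hx, sub_self]
    have hex := rTensor_exact (f := (LinearMap.ker g.toLinearMap).subtype) M
      (g := g.toLinearMap) (LinearMap.exact_subtype_ker_map _) hg
    obtain ⟨w, hw⟩ := (hex _).1 hz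
    rw [← hw]
    clear hw hz
    induction w with
    | zero => simp
    | tmul a b =>
      have : (a : B) ⊗ₜ[K] b = (a : B) • ((1 : B) ⊗ₜ[K] b) := by
        simp [TensorProduct.smul_tmul']
      simp only [LinearMap.rTensor_tmul, Submodule.subtype_apply]
      rw [this]
      exact Submodule.smul_mem_smul a.2 trivial
    | add a b ha hb => rw [map_add]; exact add_mem ha hb

lemma HodgeExt.nil {A B B' : Type u} [CommRing A] [CommRing B] [CommRing B'] [Algebra A B]
    [Algebra A B'] {r : ℕ} (g : B →ₐ[A] B') (hg : Function.Surjective g)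
    (hnil : ∀ b, g b = 0 → IsNilpotent b)
    (h : HodgeExt A r B') : HodgeExt A r B := by
  intro P _ _ _ _ hP
  let : Algebra B B' := g.toRingHom.toAlgebra
  have : IsScalarTower A B B' := IsScalarTower.of_algebraMap_eq' g.comp_algebraMap.symm
  obtain ⟨Q, _, _, hQ1, hQ2, ⟨α⟩⟩ := h (B' ⊗[B] P) (hP.hodge_baseChange P)
  refine ⟨Q, _, _, hQ1, hQ2, ?_⟩
  let gB : B →ₐ[B] B' := Algebra.ofId B B'
  let ρP : B ⊗[B] P →ₗ[B] B' ⊗[B] P := gB.toLinearMap.rTensor P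
  let ρQ : B ⊗[A] Q →ₗ[B] B' ⊗[A] Q :=
    { g.toLinearMap.rTensor Q with
      map_smul' := fun c x => (hodge_rTensor_smul g c x).trans (algebraMap_smul B' c _) }
  have hρP : Function.Surjective ρP := LinearMap.rTensor_surjective P hg
  have hρQ : Function.Surjective ρQ := LinearMap.rTensor_surjective Q hg
  let αB := α.restrictScalars B
  obtain ⟨u, hu⟩ := Module.projective_lifting_property ρQ (αB.toLinearMap ∘ₗ ρP) hρQ
  obtain ⟨v, hv⟩ := Module.projective_lifting_property ρP (αB.symm.toLinearMap ∘ₗ ρQ) hρP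
  have hus : Function.Surjective u := hodge_surj g hg hnil u fun y => by
    obtain ⟨x, hx⟩ := hρP (α.symm y)
    refine ⟨x, (LinearMap.congr_fun hu x).trans ?_⟩
    simp [hx, αB]
  have hvs : Function.Surjective v := hodge_surj gB hg hnil v fun y => by
    obtain ⟨x, hx⟩ := hρQ (α y)
    refine ⟨x, (LinearMap.congr_fun hv x).trans ?_⟩
    simp [hx, αB]
  have hinj : Function.Injective (v ∘ₗ u) :=
    OrzechProperty.injective_of_surjective_endomorphism _ (by
      rw [LinearMap.coe_comp]; exact hvs.comp hus)
  have hui : Function.Injective u := by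
    rw [LinearMap.coe_comp] at hinj; exact hinj.of_comp
  exact ⟨(TensorProduct.lid B P).symm.trans (LinearEquiv.ofBijective u ⟨hui, hus⟩)⟩

lemma HodgeExt.milnor {A B B1 B2 B12 : Type u} [CommRing A] [CommRing B] [CommRing B1]
    [CommRing B2] [CommRing B12] [Algebra A B] [Algebra A B1] [Algebra A B2] [Algebra A B12]
    {r : ℕ} (f1 : B →ₐ[A] B1) (f2 : B →ₐ[A] B2) (g1 : B1 →ₐ[A] B12) (g2 : B2 →ₐ[A] B12)
    (hcomm : ∀ x, g1 (f1 x) = g2 (f2 x))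
    (hinj : ∀ x, f1 x = 0 → f2 x = 0 → x = 0)
    (hex : ∀ x y, g1 x = g2 y → ∃ z, f1 z = x ∧ f2 z = y)
    (s : B12 →ₐ[A] B2) (hs : ∀ x, g2 (s x) = x) (ε : B12 →ₐ[A] A)
    (h1 : HodgeExt A r B1) (h2 : HodgeExt A r B2) : HodgeExt A r B := by
  intro P _ _ _ _ hP
  let : Algebra B B1 := f1.toRingHom.toAlgebra
  let : Algebra B B2 := f2.toRingHom.toAlgebra
  let : Algebra B B12 := (g1.comp f1).toRingHom.toAlgebra
  let f1B : B →ₐ[B] B1 := Algebra.ofId B B1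
  let f2B : B →ₐ[B] B2 := Algebra.ofId B B2
  let g1B : B1 →ₐ[B] B12 := { g1.toRingHom with commutes' := fun _ => rfl }
  let g2B : B2 →ₐ[B] B12 := { g2.toRingHom with commutes' := fun x => (hcomm x).symm }
  obtain ⟨Q, _, _, hQ1, hQ2, ⟨α1⟩⟩ := h1 (B1 ⊗[B] P) (hP.hodge_baseChange P)
  obtain ⟨Q', _, _, hQ1', hQ2', ⟨α2'⟩⟩ := h2 (B2 ⊗[B] P) (hP.hodge_baseChange P)
  obtain ⟨β1, hβ1⟩ := hodge_transport g1B g1 (fun _ => rfl) α1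
  -- the two `A`-modules are isomorphic
  have hQQ : Nonempty (Q' ≃ₗ[A] Q) := by
    obtain ⟨β2, -⟩ := hodge_transport g2B g2 (fun _ => rfl) α2'
    obtain ⟨γ, -⟩ := hodge_transport ε ε (fun _ => rfl) (β2.symm.trans β1)
    exact ⟨(TensorProduct.lid A Q').symm.trans (γ.trans (TensorProduct.lid A Q))⟩
  obtain ⟨eQ⟩ := hQQ
  let α2 : B2 ⊗[B] P ≃ₗ[B2] B2 ⊗[A] Q := α2'.trans (LinearEquiv.baseChange A B2 _ _ eQ)
  obtain ⟨β2, hβ2⟩ := hodge_transport g2B g2 (fun _ => rfl) α2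
  let θ : B12 ⊗[A] Q ≃ₗ[B12] B12 ⊗[A] Q := β2.symm.trans β1
  obtain ⟨θ2, hθ2⟩ := hodge_transport s s (fun _ => rfl) θ
  obtain ⟨θ3, hθ3⟩ := hodge_transport g2 g2 (fun _ => rfl) θ2
  have hgs : ∀ x, g2.toLinearMap.rTensor Q (s.toLinearMap.rTensor Q x) = x := by
    intro x
    induction x with
    | zero => simp
    | tmul a b => simp [hs]
    | add a b ha hb => simp only [map_add, ha, hb]
  have hθ : ∀ x, θ3 x = θ x := by
    intro x
    conv_lhs => rw [← hgs x, hθ3, hθ2, hgs]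
  let α3 := α2.trans θ2
  have hβ3 : ∀ x, β1 (g2B.toLinearMap.rTensor P x) = g2.toLinearMap.rTensor Q (α3 x) := by
    intro x
    change _ = g2.toLinearMap.rTensor Q (θ2 (α2 x))
    rw [← hθ3, ← hβ2, hθ]
    simp [θ]
  obtain ⟨pi, pe⟩ := hodge_pull (M := P) f1B.toLinearMap f2B.toLinearMap g1B.toLinearMap
    g2B.toLinearMap hcomm hinj hex
  obtain ⟨qi, qe⟩ := hodge_pull (M := Q) f1.toLinearMap f2.toLinearMap g1.toLinearMap
    g2.toLinearMap hcomm hinj hex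
  have qi' : ∀ x y, f1.toLinearMap.rTensor Q x = f1.toLinearMap.rTensor Q y →
      f2.toLinearMap.rTensor Q x = f2.toLinearMap.rTensor Q y → x = y := by
    intro x y hx hy
    rw [← sub_eq_zero]
    exact qi _ (by rw [map_sub, hx, sub_self]) (by rw [map_sub, hy, sub_self])
  have pcomm : ∀ x, g1B.toLinearMap.rTensor P (f1B.toLinearMap.rTensor P x) =
      g2B.toLinearMap.rTensor P (f2B.toLinearMap.rTensor P x) := by
    intro x
    induction x with
    | zero => simp
    | tmul a b =>
      simp only [LinearMap.rTensor_tmul]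
      exact congrArg (· ⊗ₜ[B] b) (hcomm a)
    | add a b ha hb => simp only [map_add, ha, hb]
  have qcomm : ∀ x, g1.toLinearMap.rTensor Q (f1.toLinearMap.rTensor Q x) =
      g2.toLinearMap.rTensor Q (f2.toLinearMap.rTensor Q x) := by
    intro x
    induction x with
    | zero => simp
    | tmul a b => simp [hcomm]
    | add a b ha hb => simp only [map_add, ha, hb]
  have hu : ∀ x : B ⊗[B] P, ∃ y : B ⊗[A] Q,
      f1.toLinearMap.rTensor Q y = α1 (f1B.toLinearMap.rTensor P x) ∧
      f2.toLinearMap.rTensor Q y = α3 (f2B.toLinearMap.rTensor P x) := by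
    intro x
    apply qe
    rw [← hβ1, ← hβ3, pcomm]
  choose u hu1 hu2 using hu
  let U : B ⊗[B] P →ₗ[B] B ⊗[A] Q :=
    { toFun := u
      map_add' := fun x y => qi' _ _ (by simp only [map_add, hu1]) (by simp only [map_add, hu2])
      map_smul' := fun c x => by
        apply qi'
        · simp only [hu1, hodge_rTensor_smul, RingHom.id_apply]
          exact α1.map_smul (f1 c) _
        · simp only [hu2, hodge_rTensor_smul, RingHom.id_apply]
          exact α3.map_smul (f2 c) _ }
  have hU : Function.Bijective U := by
    constructor
    · rw [injective_iff_map_eq_zero]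
      intro x hx
      have hx' : u x = 0 := hx
      apply pi
      · apply α1.injective
        rw [← hu1, hx', map_zero, map_zero]
      · apply α3.injective
        rw [← hu2, hx', map_zero, map_zero]
    · intro y
      obtain ⟨x, hx1, hx2⟩ := pe (α1.symm (f1.toLinearMap.rTensor Q y))
        (α3.symm (f2.toLinearMap.rTensor Q y)) (by
          apply β1.injective
          rw [hβ1, hβ3, LinearEquiv.apply_symm_apply, LinearEquiv.apply_symm_apply, qcomm])
      refine ⟨x, qi' _ _ ?_ ?_⟩
      · refine (hu1 x).trans ?_
        rw [hx1, LinearEquiv.apply_symm_apply]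
      · refine (hu2 x).trans ?_
        rw [hx2, LinearEquiv.apply_symm_apply]
  exact ⟨Q, _, _, hQ1, hQ2, ⟨(TensorProduct.lid B P).symm.trans (LinearEquiv.ofBijective U hU)⟩⟩

lemma HodgeExt.ideals {A R : Type u} [CommRing A] [CommRing R] [Algebra A R] {r : ℕ}
    (I0 I1 I12 : Ideal R) (h12 : I12 = I0 ⊔ I1)
    (s : (R ⧸ I12) →ₐ[A] (R ⧸ I1)) (hs : ∀ x, ∃ y, s (Ideal.Quotient.mk I12 x) =
      Ideal.Quotient.mk I1 y ∧ x - y ∈ I12)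
    (ε : (R ⧸ I12) →ₐ[A] A)
    (h0 : HodgeExt A r (R ⧸ I0)) (h1 : HodgeExt A r (R ⧸ I1)) :
    HodgeExt A r (R ⧸ (I0 ⊓ I1)) := by
  have l0 : I0 ≤ I12 := h12 ▸ le_sup_left
  have l1 : I1 ≤ I12 := h12 ▸ le_sup_right
  refine HodgeExt.milnor (Ideal.Quotient.factorₐ A inf_le_left)
    (Ideal.Quotient.factorₐ A inf_le_right) (Ideal.Quotient.factorₐ A l0)
    (Ideal.Quotient.factorₐ A l1) ?_ ?_ ?_ s ?_ ε h0 h1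
  · intro x
    obtain ⟨x, rfl⟩ := Ideal.Quotient.mk_surjective x
    rfl
  · intro x hx hy
    obtain ⟨x, rfl⟩ := Ideal.Quotient.mk_surjective x
    exact Ideal.Quotient.eq_zero_iff_mem.2
      ⟨Ideal.Quotient.eq_zero_iff_mem.1 hx, Ideal.Quotient.eq_zero_iff_mem.1 hy⟩
  · intro x y h
    obtain ⟨x, rfl⟩ := Ideal.Quotient.mk_surjective x
    obtain ⟨y, rfl⟩ := Ideal.Quotient.mk_surjective y
    have h' : x - y ∈ I12 := Ideal.Quotient.eq.1 h
    rw [h12] at h'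
    obtain ⟨a, ha, b, hb, hab⟩ := Submodule.mem_sup.1 h'
    refine ⟨Ideal.Quotient.mk _ (x - a), ?_, ?_⟩
    · refine Ideal.Quotient.eq.2 ?_
      simpa using ha
    · refine Ideal.Quotient.eq.2 ?_
      have : x - a - y = b := by rw [sub_right_comm, ← hab]; ring
      rwa [this]
  · intro x
    obtain ⟨x, rfl⟩ := Ideal.Quotient.mk_surjective x
    obtain ⟨y, hy, hxy⟩ := hs x
    rw [hy]
    exact (Ideal.Quotient.eq.2 hxy).symm

section HodgeAux

open MvPolynomial

/-- The ideal generated by the monomials with exponents in `S`. -/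
noncomputable def hodgeIdeal (A : Type u) [CommRing A] {n : ℕ} (S : Set (Fin n →₀ ℕ)) :
    Ideal (MvPolynomial (Fin n) A) :=
  Ideal.span ((fun s => monomial s (1 : A)) '' S)

lemma mem_hodgeIdeal {A : Type u} [CommRing A] {n : ℕ} {S : Set (Fin n →₀ ℕ)}
    {x : MvPolynomial (Fin n) A} :
    x ∈ hodgeIdeal A S ↔ ∀ m ∈ x.support, ∃ s ∈ S, s ≤ m :=
  mem_ideal_span_monomial_image

lemma hodgeIdeal_le {A : Type u} [CommRing A] {n : ℕ} {S : Set (Fin n →₀ ℕ)}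
    {J : Ideal (MvPolynomial (Fin n) A)} (h : ∀ s ∈ S, monomial s (1 : A) ∈ J) :
    hodgeIdeal A S ≤ J := by
  refine Ideal.span_le.2 ?_
  rintro _ ⟨s, hs, rfl⟩
  exact h s hs

lemma monomial_mem_hodgeIdeal {A : Type u} [CommRing A] {n : ℕ} {S : Set (Fin n →₀ ℕ)}
    {s m : Fin n →₀ ℕ} (hs : s ∈ S) (hm : s ≤ m) (a : A) : monomial m a ∈ hodgeIdeal A S := by
  rw [mem_hodgeIdeal]
  intro k hk
  have := support_monomial_subset hk
  rw [Finset.mem_singleton] at this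
  exact ⟨s, hs, this ▸ hm⟩

/-- Substitute zero for the variables in `Z`. -/
noncomputable def hodgeKill (A : Type u) [CommRing A] {n : ℕ} (Z : Set (Fin n)) :
    MvPolynomial (Fin n) A →ₐ[A] MvPolynomial (Fin n) A :=
  open Classical in aeval fun j => if j ∈ Z then 0 else X j

lemma hodgeKill_monomial_zero {A : Type u} [CommRing A] {n : ℕ} {Z : Set (Fin n)}
    {s : Fin n →₀ ℕ} {j : Fin n} (hj : j ∈ Z) (hs : s j ≠ 0) :
    hodgeKill A Z (monomial s 1) = 0 := by
  classical
  rw [hodgeKill, aeval_monomial, Finsupp.prod,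
    Finset.prod_eq_zero (Finsupp.mem_support_iff.2 hs) (by simp [hj, hs]), mul_zero]

lemma hodgeKill_monomial {A : Type u} [CommRing A] {n : ℕ} {Z : Set (Fin n)}
    {s : Fin n →₀ ℕ} (hs : ∀ j ∈ Z, s j = 0) :
    hodgeKill A Z (monomial s 1) = monomial s 1 := by
  classical
  rw [hodgeKill, aeval_monomial, monomial_eq, Finsupp.prod, Finsupp.prod, map_one, map_one]
  congr 1
  refine Finset.prod_congr rfl fun j hj => ?_
  rw [if_neg]
  exact fun h => (Finsupp.mem_support_iff.1 hj) (hs j h)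

lemma sub_hodgeKill_mem {A : Type u} [CommRing A] {n : ℕ} {Z : Set (Fin n)}
    {J : Ideal (MvPolynomial (Fin n) A)} (hJ : ∀ j ∈ Z, (X j : MvPolynomial (Fin n) A) ∈ J)
    (x : MvPolynomial (Fin n) A) : x - hodgeKill A Z x ∈ J := by
  classical
  have : (Ideal.Quotient.mkₐ A J).comp (hodgeKill A Z) = Ideal.Quotient.mkₐ A J := by
    apply MvPolynomial.algHom_ext
    intro j
    by_cases hj : j ∈ Z
    · simp only [hodgeKill, AlgHom.comp_apply, aeval_X, hj, if_true, map_zero]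
      exact (Ideal.Quotient.eq_zero_iff_mem.2 (hJ j hj)).symm
    · simp [hodgeKill, hj]
  exact Ideal.Quotient.eq.1 (AlgHom.congr_fun this x).symm

/-- The main induction. -/
lemma HodgeExt.monomial_ideal {A : Type u} [CommRing A] {n : ℕ} {r : ℕ}
    (hpoly : HodgeExt A r (MvPolynomial (Fin n) A)) (T : Finset (Fin n)) :
    ∀ S : Set (Fin n →₀ ℕ), (0 : Fin n →₀ ℕ) ∉ S →
    (∀ j ∉ T, Finsupp.single j 1 ∈ S ∨ ∀ s ∈ S, s j = 0) →
    HodgeExt A r (MvPolynomial (Fin n) A ⧸ hodgeIdeal A S) := by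
  induction T using Finset.induction_on with
  | empty =>
    intro S h0 hS
    let Z : Set (Fin n) := {j | Finsupp.single j 1 ∈ S}
    refine HodgeExt.retract (Ideal.Quotient.liftₐ (hodgeIdeal A S) (hodgeKill A Z) ?_)
      (Ideal.Quotient.mkₐ A _) ?_ hpoly
    · have : hodgeIdeal A S ≤ RingHom.ker (hodgeKill A Z) := by
        refine hodgeIdeal_le fun s hs => ?_
        obtain ⟨j, hj⟩ : ∃ j, s j ≠ 0 := by
          by_contra! hc
          exact h0 ((Finsupp.ext hc : s = 0) ▸ hs)
        refine hodgeKill_monomial_zero (j := j) ?_ hj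
        exact (hS j (by simp)).resolve_right fun h => hj (h s hs)
      exact fun a ha => this ha
    · intro b
      obtain ⟨b, rfl⟩ := Ideal.Quotient.mk_surjective b
      refine (Ideal.Quotient.eq.2 (sub_hodgeKill_mem (fun j hj => ?_) b)).symm
      exact monomial_mem_hodgeIdeal hj le_rfl 1
  | insert i T hi ih =>
    intro S h0 hS
    let S0 : Set (Fin n →₀ ℕ) := insert (Finsupp.single i 1) S
    let S1 : Set (Fin n →₀ ℕ) := Finsupp.erase i '' S
    let S12 : Set (Fin n →₀ ℕ) := insert (Finsupp.single i 1) S1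
    have hsi : Finsupp.single i 1 ≠ (0 : Fin n →₀ ℕ) := by simp
    have hS0 : HodgeExt A r (MvPolynomial (Fin n) A ⧸ hodgeIdeal A S0) := by
      refine ih S0 ?_ ?_
      · rintro (h | h)
        · exact hsi h.symm
        · exact h0 h
      · intro j hj
        by_cases hji : j = i
        · subst hji; exact Or.inl (Set.mem_insert _ _)
        · rcases hS j (by simp [hji, hj]) with h | h
          · exact Or.inl (Set.mem_insert_of_mem _ h)
          · refine Or.inr ?_
            rintro s (rfl | hs)
            · exact Finsupp.single_eq_of_ne hji
            · exact h s hs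
    have hle : ∀ s : Fin n →₀ ℕ, s.erase i ≤ s := by
      intro s j
      by_cases hji : j = i
      · subst hji; simp
      · simp [Finsupp.erase_ne hji]
    have key : HodgeExt A r
        (MvPolynomial (Fin n) A ⧸ (hodgeIdeal A S0 ⊓ hodgeIdeal A S1)) := by
      by_cases h01 : (0 : Fin n →₀ ℕ) ∈ S1
      · have htop : hodgeIdeal A S1 = ⊤ :=
          (Ideal.eq_top_iff_one _).2 (monomial_mem_hodgeIdeal h01 le_rfl 1)
        rw [htop, inf_top_eq]
        exact hS0
      · have hS1 : HodgeExt A r (MvPolynomial (Fin n) A ⧸ hodgeIdeal A S1) := by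
          refine ih S1 h01 ?_
          intro j hj
          by_cases hji : j = i
          · subst hji
            refine Or.inr ?_
            rintro _ ⟨s, -, rfl⟩
            simp
          · rcases hS j (by simp [hji, hj]) with h | h
            · refine Or.inl ⟨_, h, ?_⟩
              rw [Finsupp.erase_single_ne (Ne.symm hji)]
            · refine Or.inr ?_
              rintro _ ⟨s, hs, rfl⟩
              rw [Finsupp.erase_ne hji]
              exact h s hs
        have hmem1 : ∀ s ∈ S1, ∀ j ∈ ({i} : Set (Fin n)), s j = 0 := by
          rintro _ ⟨s, -, rfl⟩ j rfl
          simp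
        have hX : (X i : MvPolynomial (Fin n) A) ∈ hodgeIdeal A S12 :=
          monomial_mem_hodgeIdeal (Set.mem_insert _ _) le_rfl 1
        refine HodgeExt.ideals (hodgeIdeal A S0) (hodgeIdeal A S1) (hodgeIdeal A S12) ?_
          (Ideal.Quotient.liftₐ (hodgeIdeal A S12)
            ((Ideal.Quotient.mkₐ A _).comp (hodgeKill A {i})) ?_) ?_
          (Ideal.Quotient.liftₐ (hodgeIdeal A S12) (aeval fun _ => (0 : A)) ?_) hS0 hS1
        · apply le_antisymm
          · apply hodgeIdeal_le
            rintro s (rfl | hs)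
            · exact Ideal.mem_sup_left (monomial_mem_hodgeIdeal (Set.mem_insert _ _) le_rfl 1)
            · exact Ideal.mem_sup_right (monomial_mem_hodgeIdeal hs le_rfl 1)
          · refine sup_le (hodgeIdeal_le ?_) (hodgeIdeal_le ?_)
            · rintro s (rfl | hs)
              · exact hX
              · exact monomial_mem_hodgeIdeal (Set.mem_insert_of_mem _ (Set.mem_image_of_mem _ hs)) (hle s) 1
            · intro s hs
              exact monomial_mem_hodgeIdeal (Set.mem_insert_of_mem _ hs) le_rfl 1
        · have : hodgeIdeal A S12 ≤ RingHom.ker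
              ((Ideal.Quotient.mkₐ A (hodgeIdeal A S1)).comp (hodgeKill A {i})) := by
            refine hodgeIdeal_le ?_
            rintro s (rfl | hs)
            · rw [RingHom.mem_ker, AlgHom.comp_apply,
                hodgeKill_monomial_zero (Set.mem_singleton i) (by simp), map_zero]
            · rw [RingHom.mem_ker, AlgHom.comp_apply, hodgeKill_monomial (hmem1 s hs)]
              exact Ideal.Quotient.eq_zero_iff_mem.2 (monomial_mem_hodgeIdeal hs le_rfl 1)
          exact fun a ha => this ha
        · intro x
          refine ⟨hodgeKill A {i} x, rfl, sub_hodgeKill_mem ?_ x⟩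
          rintro j rfl
          exact hX
        · have : hodgeIdeal A S12 ≤ RingHom.ker
              (aeval (fun _ => (0 : A)) : MvPolynomial (Fin n) A →ₐ[A] A) := by
            refine hodgeIdeal_le ?_
            intro s hs
            have hs0 : s ≠ 0 := by
              rintro rfl
              rcases hs with h | h
              · exact hsi h.symm
              · exact h01 h
            obtain ⟨j, hj⟩ := Finsupp.ne_iff.1 hs0
            have hj : s j ≠ 0 := hj
            rw [RingHom.mem_ker, aeval_monomial, Finsupp.prod,
              Finset.prod_eq_zero (Finsupp.mem_support_iff.2 hj) (by simp [hj]), mul_zero]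
          exact fun a ha => this ha
    have hSle : hodgeIdeal A S ≤ hodgeIdeal A S0 ⊓ hodgeIdeal A S1 := by
      refine hodgeIdeal_le fun s hs => ⟨?_, ?_⟩
      · exact monomial_mem_hodgeIdeal (Set.mem_insert_of_mem _ hs) le_rfl 1
      · exact monomial_mem_hodgeIdeal (Set.mem_image_of_mem _ hs) (hle s) 1
    refine HodgeExt.nil (Ideal.Quotient.factorₐ A hSle) (Ideal.Quotient.factor_surjective hSle)
      ?_ key
    intro x hx
    obtain ⟨x, rfl⟩ := Ideal.Quotient.mk_surjective x
    have hx' : x ∈ hodgeIdeal A S0 ⊓ hodgeIdeal A S1 := Ideal.Quotient.eq_zero_iff_mem.1 hx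
    have hrad : x ∈ (hodgeIdeal A S).radical := by
      rw [x.as_sum]
      refine sum_mem fun m hm => ?_
      obtain ⟨t, ht, htm⟩ := mem_hodgeIdeal.1 hx'.1 m hm
      obtain ⟨_, ⟨s, hs, rfl⟩, hsm⟩ := mem_hodgeIdeal.1 hx'.2 m hm
      rcases ht with rfl | ht
      · refine ⟨s i + 1, ?_⟩
        rw [monomial_pow]
        refine monomial_mem_hodgeIdeal hs ?_ _
        intro j
        simp only [Finsupp.smul_apply, smul_eq_mul]
        by_cases hji : j = i
        · subst hji
          have := htm j
          simp only [Finsupp.single_eq_same] at this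
          nlinarith
        · have := hsm j
          rw [Finsupp.erase_ne hji] at this
          nlinarith
      · exact Ideal.le_radical (monomial_mem_hodgeIdeal ht htm _)
    obtain ⟨k, hk⟩ := hrad
    exact ⟨k, by rw [← map_pow]; exact Ideal.Quotient.eq_zero_iff_mem.2 hk⟩

end HodgeAux

theorem extended_of_discreteHodge_of_extended_of_polynomial
    (A : Type u) [CommRing A] [IsNoetherianRing A] (r : ℕ) (hr : 0 < r)
    (hpoly : ∀ (n : ℕ) (P : Type u) (_ : AddCommGroup P)
      (_ : Module (MvPolynomial (Fin n) A) P),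
      Module.Finite (MvPolynomial (Fin n) A) P →
      Module.Projective (MvPolynomial (Fin n) A) P →
      HasRank (MvPolynomial (Fin n) A) P r →
      IsExtendedFrom A (MvPolynomial (Fin n) A) P)
    (B : Type u) [CommRing B] [Algebra A B] (hB : IsDiscreteHodgeAlgebra A B)
    (P : Type u) [AddCommGroup P] [Module B P]
    [Module.Finite B P] [Module.Projective B P] (hrank : HasRank B P r) :
    IsExtendedFrom A B P := by
  obtain ⟨n, I, ⟨S, hS, rfl⟩, ⟨e⟩⟩ := hB
  let S' : Set (Fin (n + 1) →₀ ℕ) := {s | s ≠ 0 ∧ MvPolynomial.monomial s (1 : A) ∈ S}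
  have hSS : Ideal.span S = hodgeIdeal A S' := by
    apply le_antisymm
    · refine Ideal.span_le.2 fun p hp => ?_
      obtain ⟨s, hs, rfl⟩ := hS p hp
      have hs' : s ∈ S' := ⟨hs, hp⟩
      exact monomial_mem_hodgeIdeal hs' le_rfl 1
    · exact hodgeIdeal_le fun s hs => Ideal.subset_span hs.2
  have h : HodgeExt A r (MvPolynomial (Fin (n + 1)) A ⧸ Ideal.span S) := by
    rw [hSS]
    refine HodgeExt.monomial_ideal ?_ Finset.univ S' (fun h => h.1 rfl)
      (fun j hj => absurd (Finset.mem_univ j) hj)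
    intro M _ _ hM1 hM2 hM
    exact hpoly (n + 1) M _ _ hM1 hM2 hM
  exact HodgeExt.retract e.symm.toAlgHom e.toAlgHom (fun b => e.apply_symm_apply b) h P hrank
end

section
/- Let A, A_1, A_2, A_0 be commutative rings forming a cartesian (pullback) square with maps f_1 : A → A_1, f_2 : A → A_2, j_1 : A_1 → A_0, j_2 : A_2 → A_0, where j_2 is surjective. Let P be a finitely generated projective A-module and set P_i = P ⊗_A A_i for i = 0, 1, 2. If the natural base-change map Aut_{A_2}(P_2) → Aut_{A_0}(P_0) is surjective, then the natural base-change map Aut_A(P) → Aut_{A_1}(P_1) is surjective. -/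
/-! Statement 4 (Wiemers, Proposition 2.1(i)): in a cartesian square of commutative rings
`A → A₁`, `A → A₂`, `j₁ : A₁ → A₀`, `j₂ : A₂ → A₀` with `j₂` surjective, if the base-change
map `Aut_{A₂}(P₂) → Aut_{A₀}(P₀)` is surjective for a f.g. projective `A`-module `P`,
then `Aut_A(P) → Aut_{A₁}(P₁)` is surjective.  Here an automorphism `τ` of a base change
is "the base change of `σ`" precisely when it is compatible with the natural map on tensors. -/

universe u

open TensorProduct

theorem aut_surjective_of_cartesian_square
    (A A₁ A₂ A₀ : Type u) [CommRing A] [CommRing A₁] [CommRing A₂] [CommRing A₀]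
    [IsNoetherianRing A] [IsNoetherianRing A₁] [IsNoetherianRing A₂] [IsNoetherianRing A₀]
    [Algebra A A₁] [Algebra A A₂] [Algebra A A₀] [Algebra A₁ A₀] [Algebra A₂ A₀]
    [IsScalarTower A A₁ A₀] [IsScalarTower A A₂ A₀]
    (hj₂ : Function.Surjective (algebraMap A₂ A₀))
    (hcart : ∀ (a₁ : A₁) (a₂ : A₂), algebraMap A₁ A₀ a₁ = algebraMap A₂ A₀ a₂ →
      ∃! a : A, algebraMap A A₁ a = a₁ ∧ algebraMap A A₂ a = a₂)
    (P : Type u) [AddCommGroup P] [Module A P] [Module.Finite A P] [Module.Projective A P]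
    (hAut : ∀ τ : (A₀ ⊗[A] P) ≃ₗ[A₀] (A₀ ⊗[A] P),
      ∃ σ : (A₂ ⊗[A] P) ≃ₗ[A₂] (A₂ ⊗[A] P),
        ∀ x : A₂ ⊗[A] P,
          τ (LinearMap.rTensor P (IsScalarTower.toAlgHom A A₂ A₀).toLinearMap x) =
            LinearMap.rTensor P (IsScalarTower.toAlgHom A A₂ A₀).toLinearMap (σ x)) :
    ∀ τ₁ : (A₁ ⊗[A] P) ≃ₗ[A₁] (A₁ ⊗[A] P),
      ∃ σ : P ≃ₗ[A] P, ∀ p : P, τ₁ ((1 : A₁) ⊗ₜ[A] p) = (1 : A₁) ⊗ₜ[A] (σ p) := by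
  intro τ₁
  let j₁ := LinearMap.rTensor P (IsScalarTower.toAlgHom A A₁ A₀).toLinearMap
  let j₂ := LinearMap.rTensor P (IsScalarTower.toAlgHom A A₂ A₀).toLinearMap
  -- the automorphism induced over `A₀`
  let e := AlgebraTensorModule.cancelBaseChange A A₁ A₀ A₀ P
  have he : ∀ x : A₁ ⊗[A] P, e ((1 : A₀) ⊗ₜ[A₁] x) = j₁ x := by
    intro x
    induction x with
    | zero => simp
    | add x y hx hy => rw [tmul_add, map_add, map_add, hx, hy]
    | tmul a p => simp [e, j₁, Algebra.smul_def]
  let τ₀ : (A₀ ⊗[A] P) ≃ₗ[A₀] (A₀ ⊗[A] P) :=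
    e.symm ≪≫ₗ (τ₁.baseChange A₁ A₀ _ _) ≪≫ₗ e
  have hτ₀ : ∀ x, τ₀ (j₁ x) = j₁ (τ₁ x) := by
    intro x
    rw [← he x, ← he (τ₁ x)]
    simp [τ₀]
  obtain ⟨σ₂, hσ₂⟩ := hAut τ₀
  -- the exact sequence `0 → A → A₁ × A₂ → A₀`
  let f : A →ₗ[A] A₁ × A₂ := (Algebra.linearMap A A₁).prod (Algebra.linearMap A A₂)
  let g : A₁ × A₂ →ₗ[A] A₀ :=
    (IsScalarTower.toAlgHom A A₁ A₀).toLinearMap.coprod (-(IsScalarTower.toAlgHom A A₂ A₀).toLinearMap)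
  have hf : Function.Injective f := by
    intro a b hab
    have h1 : algebraMap A A₁ a = algebraMap A A₁ b := congrArg Prod.fst hab
    have h2 : algebraMap A A₂ a = algebraMap A A₂ b := congrArg Prod.snd hab
    refine (hcart (algebraMap A A₁ b) (algebraMap A A₂ b) ?_).unique ⟨h1, h2⟩ ⟨rfl, rfl⟩
    rw [← IsScalarTower.algebraMap_apply, ← IsScalarTower.algebraMap_apply]
  have hfg : Function.Exact f g := by
    rintro ⟨a, b⟩
    constructor
    · intro h
      have h' : algebraMap A₁ A₀ a = algebraMap A₂ A₀ b := by
        simpa [g, add_neg_eq_zero] using h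
      obtain ⟨c, ⟨h1, h2⟩, -⟩ := hcart a b h'
      exact ⟨c, Prod.ext h1 h2⟩
    · rintro ⟨c, hc⟩
      rw [← hc]
      simp [g, f, ← IsScalarTower.algebraMap_apply]
  have hfP := Module.Flat.rTensor_preserves_injective_linearMap (M := P) f hf
  have hfgP := Module.Flat.rTensor_exact P hfg
  let d := TensorProduct.prodLeft A A A₁ A₂ P
  let φ : P →ₗ[A] (A₁ ⊗[A] P) × (A₂ ⊗[A] P) :=
    (TensorProduct.mk A A₁ P 1).prod (TensorProduct.mk A A₂ P 1)
  let ψ : (A₁ ⊗[A] P) × (A₂ ⊗[A] P) →ₗ[A] A₀ ⊗[A] P := j₁.coprod (-j₂)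
  have hφ : ∀ p, φ p = d (f.rTensor P ((1 : A) ⊗ₜ[A] p)) := by
    intro p
    simp [φ, d, f]
  have hψ : ∀ x, ψ (d x) = g.rTensor P x := by
    intro x
    induction x with
    | zero => simp
    | add x y hx hy => rw [map_add, map_add, map_add, hx, hy]
    | tmul a p =>
      obtain ⟨a, b⟩ := a
      simp [ψ, d, g, j₁, j₂, add_tmul, neg_tmul]
  have hφi : Function.Injective φ := by
    intro p q h
    rw [hφ, hφ] at h
    have := hfP (d.injective h)
    simpa using congrArg (TensorProduct.lid A P) this
  have hrange : ∀ x, x ∈ LinearMap.range φ ↔ ψ x = 0 := by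
    intro x
    obtain ⟨y, rfl⟩ := d.surjective x
    rw [hψ, hfgP y]
    constructor
    · rintro ⟨p, hp⟩
      rw [hφ] at hp
      exact ⟨_, d.injective hp⟩
    · rintro ⟨z, rfl⟩
      obtain ⟨p, rfl⟩ := (TensorProduct.lid A P).symm.surjective z
      exact ⟨p, by rw [hφ]; simp⟩
  let Φ : ((A₁ ⊗[A] P) × (A₂ ⊗[A] P)) ≃ₗ[A] ((A₁ ⊗[A] P) × (A₂ ⊗[A] P)) :=
    (τ₁.restrictScalars A).prodCongr (σ₂.restrictScalars A)
  have hΦ : ∀ x, ψ (Φ x) = τ₀ (ψ x) := by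
    rintro ⟨x, y⟩
    have h2 : τ₀ (j₂ y) = j₂ (σ₂ y) := hσ₂ y
    have : ψ (Φ (x, y)) = j₁ (τ₁ x) + -j₂ (σ₂ y) := rfl
    rw [this, ← hτ₀, ← h2, ← map_neg, ← map_add]
    rfl
  have hmap : (LinearMap.range φ).map (Φ : _ →ₗ[A] _) = LinearMap.range φ := by
    ext x
    rw [Submodule.mem_map]
    constructor
    · rintro ⟨y, hy, rfl⟩
      rw [hrange] at hy ⊢
      exact (hΦ y).trans (by rw [hy, map_zero])
    · intro hx
      obtain ⟨y, rfl⟩ := Φ.surjective x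
      refine ⟨y, ?_, rfl⟩
      rw [hrange] at hx ⊢
      rw [hΦ] at hx
      exact τ₀.map_eq_zero_iff.mp hx
  let i := LinearEquiv.ofInjective φ hφi
  refine ⟨i ≪≫ₗ Φ.ofSubmodules _ _ hmap ≪≫ₗ i.symm, fun p => ?_⟩
  have key : φ (i.symm (Φ.ofSubmodules _ _ hmap (i p))) = Φ (φ p) :=
    congrArg Subtype.val (i.apply_symm_apply (Φ.ofSubmodules _ _ hmap (i p)))
  exact (congrArg Prod.fst key).symm
end

section
/- Let A, A_1, A_2, A_0 be commutative rings forming a cartesian (pullback) square with maps f_1 : A → A_1, f_2 : A → A_2, j_1 : A_1 → A_0, j_2 : A_2 → A_0, where j_2 is surjective. Let P and Q be finitely generated projective A-modules with P_i = P ⊗_A A_i and Q_i = Q ⊗_A A_i. If the base-change map Aut_{A_2}(P_2) → Aut_{A_0}(P_0) is surjective and Q_i ≅ P_i as A_i-modules for i = 1, 2, then P ≅ Q as A-modules. -/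
/-! Statement 5 (Wiemers, Proposition 2.1(ii), first part): in a cartesian square of
commutative rings with `j₂` surjective, if `Aut_{A₂}(P₂) → Aut_{A₀}(P₀)` is surjective and
`Q ⊗ A_i ≅ P ⊗ A_i` for `i = 1, 2`, then `P ≅ Q`. -/

universe u

open TensorProduct

theorem aux_fiber (A A₁ A₂ A₀ : Type u) [CommRing A] [CommRing A₁] [CommRing A₂] [CommRing A₀]
    [Algebra A A₁] [Algebra A A₂] [Algebra A A₀] [Algebra A₁ A₀] [Algebra A₂ A₀]
    [IsScalarTower A A₁ A₀] [IsScalarTower A A₂ A₀]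
    (hcart : ∀ (a₁ : A₁) (a₂ : A₂), algebraMap A₁ A₀ a₁ = algebraMap A₂ A₀ a₂ →
      ∃! a : A, algebraMap A A₁ a = a₁ ∧ algebraMap A A₂ a = a₂)
    (P : Type u) [AddCommGroup P] [Module A P] [Module.Flat A P]
    (x₁ : A₁ ⊗[A] P) (x₂ : A₂ ⊗[A] P)
    (h : LinearMap.rTensor P (IsScalarTower.toAlgHom A A₁ A₀).toLinearMap x₁ =
      LinearMap.rTensor P (IsScalarTower.toAlgHom A A₂ A₀).toLinearMap x₂) :
    ∃! p : P, (1 : A₁) ⊗ₜ[A] p = x₁ ∧ (1 : A₂) ⊗ₜ[A] p = x₂ := by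
  let d : A →ₗ[A] A₁ × A₂ := (Algebra.linearMap A A₁).prod (Algebra.linearMap A A₂)
  let g : A₁ × A₂ →ₗ[A] A₀ :=
    (IsScalarTower.toAlgHom A A₁ A₀).toLinearMap ∘ₗ LinearMap.fst A A₁ A₂ -
    (IsScalarTower.toAlgHom A A₂ A₀).toLinearMap ∘ₗ LinearMap.snd A A₁ A₂
  have hd : Function.Injective d := by
    intro a b hab
    have h1 : algebraMap A A₁ a = algebraMap A A₁ b := congrArg Prod.fst hab
    have h2 : algebraMap A A₂ a = algebraMap A A₂ b := congrArg Prod.snd hab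
    exact (hcart (algebraMap A A₁ b) (algebraMap A A₂ b) (by
      rw [← IsScalarTower.algebraMap_apply, ← IsScalarTower.algebraMap_apply])).unique
      ⟨h1, h2⟩ ⟨rfl, rfl⟩
  have hex : Function.Exact d g := by
    rintro ⟨a₁, a₂⟩
    constructor
    · intro hg
      have hg' : algebraMap A₁ A₀ a₁ - algebraMap A₂ A₀ a₂ = 0 := hg
      obtain ⟨a, ⟨h1, h2⟩, -⟩ := hcart a₁ a₂ (sub_eq_zero.mp hg')
      exact ⟨a, Prod.ext h1 h2⟩
    · rintro ⟨a, ha⟩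
      rw [← ha]
      change algebraMap A₁ A₀ (algebraMap A A₁ a) - algebraMap A₂ A₀ (algebraMap A A₂ a) = 0
      rw [← IsScalarTower.algebraMap_apply, ← IsScalarTower.algebraMap_apply, sub_self]
  have hdP := Module.Flat.rTensor_preserves_injective_linearMap (M := P) d hd
  have hexP := Module.Flat.rTensor_exact P hex
  let e := TensorProduct.prodLeft A A A₁ A₂ P
  have hed : ∀ p : P, e (d.rTensor P (1 ⊗ₜ p)) = ((1 : A₁) ⊗ₜ[A] p, (1 : A₂) ⊗ₜ[A] p) := by
    intro p
    simp [e, d]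
  have heg : ∀ y : (A₁ × A₂) ⊗[A] P, g.rTensor P y =
      LinearMap.rTensor P (IsScalarTower.toAlgHom A A₁ A₀).toLinearMap (e y).1 -
      LinearMap.rTensor P (IsScalarTower.toAlgHom A A₂ A₀).toLinearMap (e y).2 := by
    intro y
    induction y with
    | zero => simp
    | tmul a p => obtain ⟨a, b⟩ := a; simp [e, g]
    | add a b ha hb => rw [map_add, ha, hb]; simp only [map_add, Prod.fst_add, Prod.snd_add]; abel
  have hone : ∀ z : A ⊗[A] P, ∃ p : P, z = 1 ⊗ₜ p := fun z =>
    ⟨TensorProduct.lid A P z, by rw [← TensorProduct.lid_symm_apply, LinearEquiv.symm_apply_apply]⟩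
  obtain ⟨z, hz⟩ := (hexP (e.symm (x₁, x₂))).mp (by
    rw [heg, LinearEquiv.apply_symm_apply]; exact sub_eq_zero.mpr h)
  obtain ⟨p, rfl⟩ := hone z
  have hp := hed p
  rw [hz, LinearEquiv.apply_symm_apply] at hp
  refine ⟨p, ⟨(congrArg Prod.fst hp).symm, (congrArg Prod.snd hp).symm⟩, ?_⟩
  rintro q ⟨h1, h2⟩
  have hq : e (d.rTensor P (1 ⊗ₜ q)) = e (d.rTensor P (1 ⊗ₜ p)) := by
    rw [hed, hz, LinearEquiv.apply_symm_apply, h1, h2]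
  have := congrArg (TensorProduct.lid A P) (hdP (e.injective hq))
  simpa using this

theorem aux_baseChange (A B C : Type u) [CommRing A] [CommRing B] [CommRing C]
    [Algebra A B] [Algebra A C] [Algebra B C] [IsScalarTower A B C]
    (P Q : Type u) [AddCommGroup P] [Module A P] [AddCommGroup Q] [Module A Q]
    (φ : (B ⊗[A] Q) ≃ₗ[B] (B ⊗[A] P)) :
    ∃ ψ : (C ⊗[A] Q) ≃ₗ[C] (C ⊗[A] P), ∀ x,
      ψ (LinearMap.rTensor Q (IsScalarTower.toAlgHom A B C).toLinearMap x) =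
        LinearMap.rTensor P (IsScalarTower.toAlgHom A B C).toLinearMap (φ x) := by
  have key : ∀ (M : Type u) [AddCommGroup M] [Module A M] (x : B ⊗[A] M),
      LinearMap.rTensor M (IsScalarTower.toAlgHom A B C).toLinearMap x =
      TensorProduct.AlgebraTensorModule.cancelBaseChange A B C C M (1 ⊗ₜ x) := by
    intro M _ _ x
    induction x with
    | zero => simp
    | tmul b m => simp [Algebra.smul_def]
    | add a b ha hb => rw [map_add, ha, hb, TensorProduct.tmul_add, map_add]
  refine ⟨(TensorProduct.AlgebraTensorModule.cancelBaseChange A B C C Q).symm ≪≫ₗ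
    φ.baseChange B C _ _ ≪≫ₗ TensorProduct.AlgebraTensorModule.cancelBaseChange A B C C P, ?_⟩
  intro x
  rw [key, key]
  simp

theorem iso_of_cartesian_square_of_iso_baseChange
    (A A₁ A₂ A₀ : Type u) [CommRing A] [CommRing A₁] [CommRing A₂] [CommRing A₀]
    [IsNoetherianRing A] [IsNoetherianRing A₁] [IsNoetherianRing A₂] [IsNoetherianRing A₀]
    [Algebra A A₁] [Algebra A A₂] [Algebra A A₀] [Algebra A₁ A₀] [Algebra A₂ A₀]
    [IsScalarTower A A₁ A₀] [IsScalarTower A A₂ A₀]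
    (hj₂ : Function.Surjective (algebraMap A₂ A₀))
    (hcart : ∀ (a₁ : A₁) (a₂ : A₂), algebraMap A₁ A₀ a₁ = algebraMap A₂ A₀ a₂ →
      ∃! a : A, algebraMap A A₁ a = a₁ ∧ algebraMap A A₂ a = a₂)
    (P Q : Type u) [AddCommGroup P] [Module A P] [Module.Finite A P] [Module.Projective A P]
    [AddCommGroup Q] [Module A Q] [Module.Finite A Q] [Module.Projective A Q]
    (hAut : ∀ τ : (A₀ ⊗[A] P) ≃ₗ[A₀] (A₀ ⊗[A] P),
      ∃ σ : (A₂ ⊗[A] P) ≃ₗ[A₂] (A₂ ⊗[A] P),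
        ∀ x : A₂ ⊗[A] P,
          τ (LinearMap.rTensor P (IsScalarTower.toAlgHom A A₂ A₀).toLinearMap x) =
            LinearMap.rTensor P (IsScalarTower.toAlgHom A A₂ A₀).toLinearMap (σ x))
    (h₁ : Nonempty ((A₁ ⊗[A] Q) ≃ₗ[A₁] (A₁ ⊗[A] P)))
    (h₂ : Nonempty ((A₂ ⊗[A] Q) ≃ₗ[A₂] (A₂ ⊗[A] P))) :
    Nonempty (P ≃ₗ[A] Q) := by
  obtain ⟨φ₁⟩ := h₁
  obtain ⟨φ₂⟩ := h₂
  obtain ⟨ψ₁, hψ₁⟩ := aux_baseChange A A₁ A₀ P Q φ₁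
  obtain ⟨ψ₂, hψ₂⟩ := aux_baseChange A A₂ A₀ P Q φ₂
  obtain ⟨σ, hσ⟩ := hAut (ψ₂.symm ≪≫ₗ ψ₁)
  have hr₁ : ∀ (M : Type u) [AddCommGroup M] [Module A M] (m : M),
      LinearMap.rTensor M (IsScalarTower.toAlgHom A A₁ A₀).toLinearMap (1 ⊗ₜ m) = 1 ⊗ₜ m := by
    intro M _ _ m; simp
  have hr₂ : ∀ (M : Type u) [AddCommGroup M] [Module A M] (m : M),
      LinearMap.rTensor M (IsScalarTower.toAlgHom A A₂ A₀).toLinearMap (1 ⊗ₜ m) = 1 ⊗ₜ m := by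
    intro M _ _ m; simp
  let θ := φ₂ ≪≫ₗ σ
  have hθ : ∀ x, ψ₁ (LinearMap.rTensor Q (IsScalarTower.toAlgHom A A₂ A₀).toLinearMap x) =
      LinearMap.rTensor P (IsScalarTower.toAlgHom A A₂ A₀).toLinearMap (θ x) := by
    intro x
    have := hσ (φ₂ x)
    rw [← hψ₂] at this
    simpa [θ] using this
  have hP := aux_fiber A A₁ A₂ A₀ hcart P
  have hQ := aux_fiber A A₁ A₂ A₀ hcart Q
  have hPu : ∀ p p' : P, (1 : A₁) ⊗ₜ[A] p = (1 : A₁) ⊗ₜ[A] p' →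
      (1 : A₂) ⊗ₜ[A] p = (1 : A₂) ⊗ₜ[A] p' → p = p' := fun p p' h1 h2 =>
    (hP (1 ⊗ₜ p') (1 ⊗ₜ p') (by rw [hr₁, hr₂])).unique ⟨h1, h2⟩ ⟨rfl, rfl⟩
  have hQu : ∀ p p' : Q, (1 : A₁) ⊗ₜ[A] p = (1 : A₁) ⊗ₜ[A] p' →
      (1 : A₂) ⊗ₜ[A] p = (1 : A₂) ⊗ₜ[A] p' → p = p' := fun p p' h1 h2 =>
    (hQ (1 ⊗ₜ p') (1 ⊗ₜ p') (by rw [hr₁, hr₂])).unique ⟨h1, h2⟩ ⟨rfl, rfl⟩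
  have hf : ∀ q : Q, ∃ p : P, (1 : A₁) ⊗ₜ[A] p = φ₁ (1 ⊗ₜ q) ∧ (1 : A₂) ⊗ₜ[A] p = θ (1 ⊗ₜ q) :=
    fun q => (hP _ _ (by rw [← hψ₁, ← hθ, hr₁, hr₂])).exists
  choose f hf1 hf2 using hf
  let F : Q →ₗ[A] P :=
    { toFun := f
      map_add' := fun x y => hPu _ _
        (by rw [hf1, TensorProduct.tmul_add, TensorProduct.tmul_add, map_add, hf1, hf1])
        (by rw [hf2, TensorProduct.tmul_add, TensorProduct.tmul_add, map_add, hf2, hf2])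
      map_smul' := fun a x => hPu _ _
        (by
          rw [hf1, RingHom.id_apply, TensorProduct.tmul_smul, TensorProduct.tmul_smul, hf1,
            ← algebraMap_smul A₁ a, map_smul, algebraMap_smul])
        (by
          rw [hf2, RingHom.id_apply, TensorProduct.tmul_smul, TensorProduct.tmul_smul, hf2,
            ← algebraMap_smul A₂ a, map_smul, algebraMap_smul]) }
  refine ⟨(LinearEquiv.ofBijective F ⟨?_, ?_⟩).symm⟩
  · intro x y hxy
    have hxy' : f x = f y := hxy
    refine hQu x y (φ₁.injective ?_) (θ.injective ?_)
    · rw [← hf1, ← hf1, hxy']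
    · rw [← hf2, ← hf2, hxy']
  · intro p
    obtain ⟨q, h1, h2⟩ := (hQ (φ₁.symm (1 ⊗ₜ p)) (θ.symm (1 ⊗ₜ p)) (by
      apply ψ₁.injective
      rw [hψ₁, hθ, LinearEquiv.apply_symm_apply, LinearEquiv.apply_symm_apply, hr₁, hr₂])).exists
    refine ⟨q, hPu _ _ ?_ ?_⟩
    · change (1 : A₁) ⊗ₜ[A] f q = _
      rw [hf1, h1, LinearEquiv.apply_symm_apply]
    · change (1 : A₂) ⊗ₜ[A] f q = _
      rw [hf2, h2, LinearEquiv.apply_symm_apply]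
end

section
/- Let A, A_1, A_2, A_0 be commutative rings forming a cartesian (pullback) square with maps f_1 : A → A_1, f_2 : A → A_2, j_1 : A_1 → A_0, j_2 : A_2 → A_0, where both j_1 and j_2 are surjective. Let P be a finitely generated projective A-module with P_i = P ⊗_A A_i. If the natural map Um(P_2) → Um(P_0) is surjective, then the natural map Um(P) → Um(P_1) is surjective. -/
/-! Statement 7 (Wiemers, Proposition 2.1(iii)): in a cartesian square of commutative rings
with both `j₁` and `j₂` surjective, if `Um(P₂) → Um(P₀)` is surjective then
`Um(P) → Um(P₁)` is surjective. -/

universe u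

open TensorProduct

/-- An element `p` of a `B`-module `P` is unimodular if some linear form takes value `1`
on it. -/
def IsUnimodular (B : Type u) [CommRing B] {P : Type u} [AddCommGroup P] [Module B P]
    (p : P) : Prop :=
  ∃ φ : P →ₗ[B] B, φ p = 1

theorem unimodular_lifts_of_cartesian_square
    (A A₁ A₂ A₀ : Type u) [CommRing A] [CommRing A₁] [CommRing A₂] [CommRing A₀]
    [IsNoetherianRing A] [IsNoetherianRing A₁] [IsNoetherianRing A₂] [IsNoetherianRing A₀]
    [Algebra A A₁] [Algebra A A₂] [Algebra A A₀] [Algebra A₁ A₀] [Algebra A₂ A₀]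
    [IsScalarTower A A₁ A₀] [IsScalarTower A A₂ A₀]
    (hj₁ : Function.Surjective (algebraMap A₁ A₀))
    (hj₂ : Function.Surjective (algebraMap A₂ A₀))
    (hcart : ∀ (a₁ : A₁) (a₂ : A₂), algebraMap A₁ A₀ a₁ = algebraMap A₂ A₀ a₂ →
      ∃! a : A, algebraMap A A₁ a = a₁ ∧ algebraMap A A₂ a = a₂)
    (P : Type u) [AddCommGroup P] [Module A P] [Module.Finite A P] [Module.Projective A P]
    (hUm : ∀ y : A₀ ⊗[A] P, IsUnimodular A₀ y →
      ∃ x : A₂ ⊗[A] P, IsUnimodular A₂ x ∧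
        LinearMap.rTensor P (IsScalarTower.toAlgHom A A₂ A₀).toLinearMap x = y) :
    ∀ y : A₁ ⊗[A] P, IsUnimodular A₁ y →
      ∃ p : P, IsUnimodular A p ∧ (1 : A₁) ⊗ₜ[A] p = y := by
  classical
  intro y hy
  -- the two projections from `A` are surjective
  have hf₁ : Function.Surjective (algebraMap A A₁) := fun a₁ => by
    obtain ⟨a₂, h⟩ := hj₂ (algebraMap A₁ A₀ a₁)
    obtain ⟨a, ⟨h1, _⟩, _⟩ := hcart a₁ a₂ h.symm
    exact ⟨a, h1⟩
  have hf₂ : Function.Surjective (algebraMap A A₂) := fun a₂ => by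
    obtain ⟨a₁, h⟩ := hj₁ (algebraMap A₂ A₀ a₂)
    obtain ⟨a, ⟨_, h2⟩, _⟩ := hcart a₁ a₂ h
    exact ⟨a, h2⟩
  let g₁ : A₁ →ₗ[A] A₀ := (IsScalarTower.toAlgHom A A₁ A₀).toLinearMap
  let g₂ : A₂ →ₗ[A] A₀ := (IsScalarTower.toAlgHom A A₂ A₀).toLinearMap
  -- the image of `y` is unimodular
  have hy0 : IsUnimodular A₀ (LinearMap.rTensor P g₁ y) := by
    obtain ⟨φ, hφ⟩ := hy
    let ψ : P →ₗ[A] A₀ := g₁ ∘ₗ (φ.restrictScalars A) ∘ₗ (TensorProduct.mk A A₁ P 1)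
    let Ψ : A₀ ⊗[A] P →ₗ[A₀] A₀ := LinearMap.liftBaseChange A₀ ψ
    refine ⟨Ψ, ?_⟩
    have key : ∀ z : A₁ ⊗[A] P, Ψ (LinearMap.rTensor P g₁ z) = g₁ (φ z) := by
      intro z
      induction z with
      | zero => simp
      | add a b ha hb => simp only [map_add, ha, hb]
      | tmul a p =>
        have : a ⊗ₜ[A] p = a • ((1 : A₁) ⊗ₜ[A] p) := by
          rw [TensorProduct.smul_tmul', smul_eq_mul, mul_one]
        have h2 : φ (a ⊗ₜ[A] p) = a * φ ((1 : A₁) ⊗ₜ[A] p) := by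
          rw [this, map_smul, smul_eq_mul]
        rw [h2]
        simp [Ψ, ψ, g₁, Algebra.smul_def]
    rw [key, hφ]
    simp [g₁]
  obtain ⟨x, hx, hxy⟩ := hUm _ hy0
  obtain ⟨q, hq⟩ := TensorProduct.mk_surjective A P A₂ hf₂ x
  let K₂ : Submodule A A := LinearMap.ker (Algebra.linearMap A A₂)
  have hex : Function.Exact ((Algebra.linearMap A A₁) ∘ₗ K₂.subtype) g₁ := by
    intro a₁
    constructor
    · intro h
      obtain ⟨a, ⟨h1, h2⟩, _⟩ := hcart a₁ 0 (by simpa [g₁] using h)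
      exact ⟨⟨a, by simpa [K₂] using h2⟩, by simpa using h1⟩
    · rintro ⟨⟨a, ha⟩, rfl⟩
      have ha' : algebraMap A A₂ a = 0 := by simpa [K₂] using ha
      have : algebraMap A A₀ a = 0 := by
        rw [IsScalarTower.algebraMap_apply A A₂ A₀, ha', map_zero]
      simpa [g₁] using this
  have hex' := rTensor_exact P hex (show Function.Surjective g₁ from hj₁)
  have hz : LinearMap.rTensor P g₁ (y - (1 : A₁) ⊗ₜ[A] q) = 0 := by
    rw [map_sub, ← hxy, ← hq]
    simp [g₁]
  obtain ⟨z, hz⟩ := (hex' _).1 hz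
  let k : P := TensorProduct.lid A P (LinearMap.rTensor P K₂.subtype z)
  have hk : (1 : A) ⊗ₜ[A] k = LinearMap.rTensor P K₂.subtype z :=
    (TensorProduct.lid A P).symm_apply_apply _
  have hk₁ : (1 : A₁) ⊗ₜ[A] k = y - (1 : A₁) ⊗ₜ[A] q := by
    have := congrArg (LinearMap.rTensor P (Algebra.linearMap A A₁)) hk
    rw [← LinearMap.comp_apply, ← LinearMap.rTensor_comp, hz] at this
    simpa using this
  have hk₂ : (1 : A₂) ⊗ₜ[A] k = 0 := by
    have := congrArg (LinearMap.rTensor P (Algebra.linearMap A A₂)) hk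
    rw [← LinearMap.comp_apply, ← LinearMap.rTensor_comp] at this
    have h0 : (Algebra.linearMap A A₂) ∘ₗ K₂.subtype = 0 := by
      ext a
      exact a.2
    rw [h0] at this
    simpa using this
  have hp₁ : (1 : A₁) ⊗ₜ[A] (q + k) = y := by
    rw [TensorProduct.tmul_add, hk₁]; abel
  have hp₂ : (1 : A₂) ⊗ₜ[A] (q + k) = x := by
    rw [TensorProduct.tmul_add, hk₂, add_zero]; exact hq
  refine ⟨q + k, ?_, hp₁⟩
  obtain ⟨φ₁, h₁⟩ := hy
  obtain ⟨φ₂, h₂⟩ := hx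
  obtain ⟨φ, hφ⟩ := Module.projective_lifting_property (Algebra.linearMap A A₁)
    ((φ₁.restrictScalars A) ∘ₗ (TensorProduct.mk A A₁ P 1)) hf₁
  obtain ⟨ψ, hψ⟩ := Module.projective_lifting_property (Algebra.linearMap A A₂)
    ((φ₂.restrictScalars A) ∘ₗ (TensorProduct.mk A A₂ P 1)) hf₂
  have e₁ : algebraMap A A₁ (φ (q + k)) = 1 := by
    have := LinearMap.congr_fun hφ (q + k)
    simp only [LinearMap.comp_apply, TensorProduct.mk_apply, hp₁] at this
    exact this.trans h₁
  have e₂ : algebraMap A A₂ (ψ (q + k)) = 1 := by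
    have := LinearMap.congr_fun hψ (q + k)
    simp only [LinearMap.comp_apply, TensorProduct.mk_apply, hp₂] at this
    exact this.trans h₂
  have e : (1 - φ (q + k)) * (1 - ψ (q + k)) = 0 :=
    (hcart 0 0 (by simp)).unique ⟨by rw [map_mul, map_sub, e₁]; simp,
      by rw [map_mul, map_sub _ 1 (ψ _), e₂]; simp⟩ ⟨map_zero _, map_zero _⟩
  refine ⟨φ + ψ - φ (q + k) • ψ, ?_⟩
  simp only [LinearMap.sub_apply, LinearMap.add_apply, LinearMap.smul_apply, smul_eq_mul]
  linear_combination -e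
end

section
/- Let A be a commutative Noetherian ring and let J be an ideal of R = A[X_1,…,X_n] generated by square-free monomials. Then for every r ≥ 1, the natural map GL_r(R) → GL_r(R/J) is surjective. -/
/-! Statement 8 (Wiemers, Theorem 2.3): if `J ⊆ A[X_1,…,X_n]` is an ideal generated by
square-free monomials, then `GL_r(R) → GL_r(R/J)` is surjective for all `r ≥ 1`. -/

universe u

/-- An ideal of `A[X_1,…,X_n]` generated by square-free monomials, i.e. by products of
distinct variables. -/
def IsSquarefreeMonomialIdeal {A : Type u} [CommRing A] {n : ℕ}
    (I : Ideal (MvPolynomial (Fin n) A)) : Prop :=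
  ∃ S : Set (MvPolynomial (Fin n) A),
    (∀ p ∈ S, ∃ t : Finset (Fin n), t.Nonempty ∧ p = ∏ i ∈ t, MvPolynomial.X i) ∧
    I = Ideal.span S

/-- Gluing lemma: a compatible family of commuting idempotent retractions of a monoid. -/
theorem glue_units {S ι : Type*} [Monoid S] [DecidableEq ι] (Φ : Finset ι → S →* S)
    (hΦ : ∀ F G x, Φ F (Φ G x) = Φ (F ∩ G) x) (N : S) (k : ℕ) :
    ∀ 𝓕 : Finset (Finset ι), 𝓕.card = k → (∀ F ∈ 𝓕, ∀ G, G ⊆ F → G ∈ 𝓕) →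
      (∀ F ∈ 𝓕, IsUnit (Φ F N)) →
      ∃ M : S, IsUnit M ∧ ∀ F ∈ 𝓕, Φ F M = Φ F N := by
  induction k with
  | zero =>
    intro 𝓕 hc _ _
    rw [Finset.card_eq_zero] at hc
    subst hc
    exact ⟨1, isUnit_one, by simp⟩
  | succ k ih =>
    intro 𝓕 hc hd hu
    have hne : 𝓕.Nonempty := by
      rw [← Finset.card_pos]; omega
    obtain ⟨F, hF, hmax⟩ := Finset.exists_max_image 𝓕 Finset.card hne
    have hmax' : ∀ G ∈ 𝓕, F ⊆ G → G = F := fun G hG h =>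
      (Finset.eq_of_subset_of_card_le h (hmax G hG)).symm
    obtain ⟨M, hM, hMF⟩ := ih (𝓕.erase F) (by rw [Finset.card_erase_of_mem hF]; omega)
      (by
        intro G hG H hH
        rw [Finset.mem_erase] at hG ⊢
        refine ⟨?_, hd G hG.2 H hH⟩
        rintro rfl
        exact hG.1 (hmax' G hG.2 hH))
      (fun G hG => hu G (Finset.mem_of_mem_erase hG))
    obtain ⟨u, hu1⟩ := hM.map (Φ F)
    obtain ⟨v, hv1⟩ := hu F hF
    refine ⟨M * (↑(u⁻¹ * v) : S), hM.mul (Units.isUnit _), ?_⟩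
    -- the value of `Φ G` on the correction factor
    have hcorr : ∀ G, Φ (G ∩ F) M * Φ G (↑(u⁻¹ * v) : S) = Φ (G ∩ F) N := by
      intro G
      rw [← hΦ, ← hΦ, ← hu1, ← hv1, ← map_mul]
      simp
    intro G hG
    rw [map_mul]
    by_cases hGF : G = F
    · subst hGF
      simpa using hcorr G
    · have hGFm : G ∩ F ∈ 𝓕.erase F := by
        rw [Finset.mem_erase]
        refine ⟨fun h => hGF (hmax' G hG (Finset.inter_eq_right.mp h)),
          hd G hG _ Finset.inter_subset_left⟩
      have h1 := hcorr G
      rw [← hMF _ hGFm] at h1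
      have h2 : IsUnit (Φ (G ∩ F) M) := hM.map _
      have h3 : Φ G (↑(u⁻¹ * v) : S) = 1 := h2.mul_left_cancel (by rw [h1, mul_one])
      rw [h3, mul_one, hMF G (Finset.mem_erase.mpr ⟨hGF, hG⟩)]

/-- Keep the variables in `F`, kill the others. -/
noncomputable def faceMap (A : Type u) [CommRing A] {n : ℕ} (F : Finset (Fin n)) :
    MvPolynomial (Fin n) A →ₐ[A] MvPolynomial (Fin n) A :=
  MvPolynomial.aeval (fun i => if i ∈ F then MvPolynomial.X i else 0)

theorem faceMap_X (A : Type u) [CommRing A] {n : ℕ} (F : Finset (Fin n)) (i : Fin n) :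
    faceMap A F (MvPolynomial.X i) = if i ∈ F then MvPolynomial.X i else 0 := by
  simp [faceMap]

theorem faceMap_comp (A : Type u) [CommRing A] {n : ℕ} (F G : Finset (Fin n))
    (p : MvPolynomial (Fin n) A) : faceMap A F (faceMap A G p) = faceMap A (F ∩ G) p := by
  have : (faceMap A F).comp (faceMap A G) = faceMap A (F ∩ G) := by
    apply MvPolynomial.algHom_ext
    intro i
    simp only [AlgHom.comp_apply, faceMap_X, Finset.mem_inter]
    by_cases h1 : i ∈ G <;> by_cases h2 : i ∈ F <;> simp [h1, h2, faceMap_X]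
  rw [← this]; rfl

theorem faceMap_monomial (A : Type u) [CommRing A] {n : ℕ} (F : Finset (Fin n))
    (m : Fin n →₀ ℕ) (a : A) :
    faceMap A F (MvPolynomial.monomial m a) =
      if m.support ⊆ F then MvPolynomial.monomial m a else 0 := by
  rw [MvPolynomial.monomial_eq, Finsupp.prod, map_mul, map_prod]
  simp only [map_pow, faceMap_X]
  rw [show faceMap A F (MvPolynomial.C a) = MvPolynomial.C a from (faceMap A F).commutes a]
  split_ifs with h
  · congr 1
    exact Finset.prod_congr rfl fun i hi => by rw [if_pos (h hi)]
  · obtain ⟨i, hi, hiF⟩ := Finset.not_subset.mp h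
    rw [Finset.prod_eq_zero hi, mul_zero]
    rw [if_neg hiF, zero_pow (Finsupp.mem_support_iff.mp hi)]

theorem coeff_faceMap (A : Type u) [CommRing A] {n : ℕ} (m : Fin n →₀ ℕ)
    (p : MvPolynomial (Fin n) A) :
    (faceMap A m.support p).coeff m = p.coeff m := by
  induction p using MvPolynomial.induction_on' with
  | monomial s a =>
    rw [faceMap_monomial]
    split_ifs with h
    · rfl
    · rw [MvPolynomial.coeff_monomial, if_neg, MvPolynomial.coeff_zero]
      rintro rfl
      exact h subset_rfl
  | add p q hp hq => rw [map_add, MvPolynomial.coeff_add, MvPolynomial.coeff_add, hp, hq]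

theorem mem_of_faceMap_eq_zero (A : Type u) [CommRing A] {n : ℕ}
    (J : Ideal (MvPolynomial (Fin n) A)) (p : MvPolynomial (Fin n) A)
    (h : ∀ F : Finset (Fin n), (∏ i ∈ F, MvPolynomial.X i) ∉ J → faceMap A F p = 0) :
    p ∈ J := by
  rw [MvPolynomial.as_sum p]
  refine Ideal.sum_mem _ fun m _ => ?_
  by_cases hm : (∏ i ∈ m.support, MvPolynomial.X i) ∈ J
  · rw [MvPolynomial.monomial_eq, Finsupp.prod]
    refine Ideal.mul_mem_left _ _ (Ideal.mem_of_dvd _ ?_ hm)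
    exact Finset.prod_dvd_prod_of_dvd _ _ fun i hi =>
      dvd_pow_self _ (Finsupp.mem_support_iff.mp hi)
  · rw [← coeff_faceMap, h _ hm]
    simp

theorem faceMap_eq_zero_of_mem (A : Type u) [CommRing A] {n : ℕ}
    (J : Ideal (MvPolynomial (Fin n) A)) (hJ : IsSquarefreeMonomialIdeal J)
    (F : Finset (Fin n)) (hF : (∏ i ∈ F, MvPolynomial.X i) ∉ J)
    (p : MvPolynomial (Fin n) A) (hp : p ∈ J) : faceMap A F p = 0 := by
  obtain ⟨S, hS, rfl⟩ := hJ
  have : Ideal.span S ≤ RingHom.ker (faceMap A F) := by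
    rw [Ideal.span_le]
    intro q hq
    obtain ⟨t, -, rfl⟩ := hS q hq
    rw [SetLike.mem_coe, RingHom.mem_ker, map_prod]
    have : ¬ t ⊆ F := fun h => hF
      (Ideal.mem_of_dvd _ (Finset.prod_dvd_prod_of_subset _ _ _ h) (Ideal.subset_span hq))
    obtain ⟨i, hi, hiF⟩ := Finset.not_subset.mp this
    exact Finset.prod_eq_zero hi (by rw [faceMap_X, if_neg hiF])
  exact this hp

theorem GL_surjective_of_squarefree_monomial_ideal
    (A : Type u) [CommRing A] [IsNoetherianRing A] (n : ℕ)
    (J : Ideal (MvPolynomial (Fin n) A)) (hJ : IsSquarefreeMonomialIdeal J)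
    (r : ℕ) (hr : 1 ≤ r)
    (N : Matrix (Fin r) (Fin r) (MvPolynomial (Fin n) A ⧸ J)) (hN : IsUnit N) :
    ∃ M : Matrix (Fin r) (Fin r) (MvPolynomial (Fin n) A),
      IsUnit M ∧ M.map (Ideal.Quotient.mk J) = N := by
  classical
  choose s hs using Ideal.Quotient.mk_surjective (I := J)
  have hlift : ∀ F : Finset (Fin n), (∏ i ∈ F, MvPolynomial.X i) ∉ J →
      ∀ P Q : Matrix (Fin r) (Fin r) (MvPolynomial (Fin n) A),
        (Ideal.Quotient.mk J).mapMatrix P = (Ideal.Quotient.mk J).mapMatrix Q →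
        (faceMap A F).toRingHom.mapMatrix P = (faceMap A F).toRingHom.mapMatrix Q := by
    intro F hF P Q h
    ext1 i j
    have hij : Ideal.Quotient.mk J (P i j) = Ideal.Quotient.mk J (Q i j) :=
      congrFun (congrFun h i) j
    have := faceMap_eq_zero_of_mem A J hJ F hF _ (Ideal.Quotient.eq.mp hij)
    rw [map_sub, sub_eq_zero] at this
    exact this
  have hsec : ∀ P : Matrix (Fin r) (Fin r) (MvPolynomial (Fin n) A ⧸ J),
      (Ideal.Quotient.mk J).mapMatrix (P.map s) = P := by
    intro P
    ext1 i j
    exact hs _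
  obtain ⟨u, rfl⟩ := hN
  obtain ⟨M, hM, hMF⟩ := glue_units
    (fun F => ((faceMap A F).toRingHom.mapMatrix (m := Fin r)).toMonoidHom)
    (by
      intro F G x
      ext1 i j
      exact faceMap_comp A F G (x i j))
    ((u : Matrix (Fin r) (Fin r) (MvPolynomial (Fin n) A ⧸ J)).map s) _
    (Finset.univ.filter fun F : Finset (Fin n) =>
      (∏ i ∈ F, (MvPolynomial.X i : MvPolynomial (Fin n) A)) ∉ J) rfl
    (by
      intro F hF G hGF
      rw [Finset.mem_filter] at hF ⊢
      exact ⟨Finset.mem_univ _, fun h => hF.2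
        (Ideal.mem_of_dvd _ (Finset.prod_dvd_prod_of_subset _ _ _ hGF) h)⟩)
    (by
      intro F hF
      rw [Finset.mem_filter] at hF
      refine ⟨⟨_, (faceMap A F).toRingHom.mapMatrix ((↑u⁻¹ : Matrix _ _ _).map s), ?_, ?_⟩, rfl⟩
      · refine (map_mul (faceMap A F).toRingHom.mapMatrix _ _).symm.trans ?_
        rw [hlift F hF.2 _ 1, map_one]
        rw [map_mul, hsec, hsec, map_one, Units.mul_inv]
      · refine (map_mul (faceMap A F).toRingHom.mapMatrix _ _).symm.trans ?_
        rw [hlift F hF.2 _ 1, map_one]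
        rw [map_mul, hsec, hsec, map_one, Units.inv_mul])
  refine ⟨M, hM, ?_⟩
  ext1 i j
  rw [Matrix.map_apply, ← hs ((u : Matrix _ _ _) i j), Ideal.Quotient.eq]
  refine mem_of_faceMap_eq_zero A J _ fun F hF => ?_
  rw [map_sub, sub_eq_zero]
  exact congrFun (congrFun (hMF F (Finset.mem_filter.mpr ⟨Finset.mem_univ _, hF⟩)) i) j
end

section
/- Let A be a commutative Noetherian ring and let R = ⊕_{i≥0} R_i be a positively graded commutative Noetherian ring with R_0 = A. Let M be a finitely presented R-module. Then the set J(A, M) of all u ∈ A such that the localized module M_u is extended from A_u is an ideal of A. In particular, if M_𝔭 is extended from A_𝔭 for every prime ideal 𝔭 of A, then M is extended from A. -/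
universe u

open TensorProduct

/-- A module `M` over an `A`-algebra `B` is extended from `A` if `M ≅ B ⊗[A] N` for some
`A`-module `N`. -/
def ExtendedFromAlg (A B : Type u) [CommRing A] [CommRing B] [Algebra A B]
    (M : Type u) [AddCommGroup M] [Module B M] : Prop :=
  ∃ (N : Type u) (_ : AddCommGroup N) (_ : Module A N), Nonempty (M ≃ₗ[B] B ⊗[A] N)

/-- `M_u` is extended from `A_u`, phrased for arbitrary realizations `Aᵤ`, `Rᵤ`, `Mᵤ` of the
localizations of `A`, `R`, `M` at the powers of `u`. -/
def IsLocallyExtendedAway (A R : Type u) [CommRing A] [CommRing R] [Algebra A R]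
    (M : Type u) [AddCommGroup M] [Module R M] (u : A) : Prop :=
  ∀ (Aᵤ Rᵤ Mᵤ : Type u) [CommRing Aᵤ] [CommRing Rᵤ] [AddCommGroup Mᵤ]
    [Algebra A Aᵤ] [Algebra R Rᵤ] [Algebra A Rᵤ] [Algebra Aᵤ Rᵤ]
    [IsScalarTower A R Rᵤ] [IsScalarTower A Aᵤ Rᵤ]
    [IsLocalization.Away u Aᵤ] [IsLocalization.Away (algebraMap A R u) Rᵤ]
    [Module R Mᵤ] [Module Rᵤ Mᵤ] [IsScalarTower R Rᵤ Mᵤ]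
    (g : M →ₗ[R] Mᵤ),
    IsLocalizedModule (Submonoid.powers (algebraMap A R u)) g →
    ExtendedFromAlg Aᵤ Rᵤ Mᵤ

/-- `M_𝔭` is extended from `A_𝔭`, phrased for arbitrary realizations `Aₚ`, `Rₚ`, `Mₚ` of the
localizations of `A`, `R`, `M` at the prime `𝔭` of `A`. -/
def IsLocallyExtendedAtPrime (A R : Type u) [CommRing A] [CommRing R] [Algebra A R]
    (M : Type u) [AddCommGroup M] [Module R M] (𝔭 : PrimeSpectrum A) : Prop :=
  ∀ (Aₚ Rₚ Mₚ : Type u) [CommRing Aₚ] [CommRing Rₚ] [AddCommGroup Mₚ]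
    [Algebra A Aₚ] [Algebra R Rₚ] [Algebra A Rₚ] [Algebra Aₚ Rₚ]
    [IsScalarTower A R Rₚ] [IsScalarTower A Aₚ Rₚ]
    [IsLocalization.AtPrime Aₚ 𝔭.asIdeal]
    [IsLocalization (Algebra.algebraMapSubmonoid R 𝔭.asIdeal.primeCompl) Rₚ]
    [Module R Mₚ] [Module Rₚ Mₚ] [IsScalarTower R Rₚ Mₚ]
    (g : M →ₗ[R] Mₚ),
    IsLocalizedModule (Algebra.algebraMapSubmonoid R 𝔭.asIdeal.primeCompl) g →
    ExtendedFromAlg Aₚ Rₚ Mₚ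


/-! ### Helper material -/

namespace QPG

open Polynomial

/-- cokernel of a matrix -/
abbrev Cok {S : Type u} [CommRing S] {n m : ℕ} (G : Matrix (Fin n) (Fin m) S) : Type u :=
  (Fin n → S) ⧸ LinearMap.range G.mulVecLin

/-- matrix data of a surjection between cokernels -/
def Srj {S : Type u} [CommRing S] {n m : ℕ} (G1 G2 : Matrix (Fin n) (Fin m) S) : Prop :=
  ∃ (a : Matrix (Fin n) (Fin n) S) (H : Matrix (Fin m) (Fin m) S)
    (X : Matrix (Fin n) (Fin n) S) (Y : Matrix (Fin m) (Fin n) S),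
    a * G1 = G2 * H ∧ a * X + G2 * Y = 1

/-- matrix data of an isomorphism of cokernels -/
def MI {S : Type u} [CommRing S] {n m : ℕ} (G1 G2 : Matrix (Fin n) (Fin m) S) : Prop :=
  ∃ (a b : Matrix (Fin n) (Fin n) S) (H K : Matrix (Fin m) (Fin m) S)
    (C D : Matrix (Fin m) (Fin n) S),
    a * G1 = G2 * H ∧ b * G2 = G1 * K ∧ b * a = 1 + G1 * C ∧ a * b = 1 + G2 * D

lemma Srj.refl {S : Type u} [CommRing S] {n m : ℕ} (G : Matrix (Fin n) (Fin m) S) : Srj G G :=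
  ⟨1, 1, 1, 0, by simp, by simp⟩

lemma Srj.trans {S : Type u} [CommRing S] {n m : ℕ} {G1 G2 G3 : Matrix (Fin n) (Fin m) S}
    (h : Srj G1 G2) (h' : Srj G2 G3) : Srj G1 G3 := by
  obtain ⟨a, H, X, Y, h1, h2⟩ := h
  obtain ⟨a', H', X', Y', h1', h2'⟩ := h'
  refine ⟨a' * a, H' * H, X * X', Y' + H' * Y * X', ?_, ?_⟩
  · rw [Matrix.mul_assoc, h1, ← Matrix.mul_assoc, h1', Matrix.mul_assoc]
  · have e : a' * a * (X * X') = a' * X' - G3 * H' * Y * X' := by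
      have : a * X = 1 - G2 * Y := by rw [← h2]; abel
      calc a' * a * (X * X') = a' * (a * X) * X' := by simp only [Matrix.mul_assoc]
        _ = a' * X' - (a' * G2) * Y * X' := by
          rw [this]; simp only [Matrix.mul_sub, Matrix.sub_mul, Matrix.mul_one, Matrix.mul_assoc]
        _ = _ := by rw [h1']
    rw [e, ← h2', Matrix.mul_add]
    simp only [Matrix.mul_assoc]
    abel

lemma Srj.map {S S' : Type u} [CommRing S] [CommRing S'] {n m : ℕ}
    {G1 G2 : Matrix (Fin n) (Fin m) S} (h : Srj G1 G2) (f : S →+* S') :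
    Srj (G1.map f) (G2.map f) := by
  obtain ⟨a, H, X, Y, h1, h2⟩ := h
  refine ⟨a.map f, H.map f, X.map f, Y.map f, ?_, ?_⟩
  · rw [← Matrix.map_mul, h1, Matrix.map_mul]
  · rw [← Matrix.map_mul, ← Matrix.map_mul, ← Matrix.map_add _ (map_add f), h2]
    simp

lemma Srj.surj {S : Type u} [CommRing S] {n m : ℕ} {G1 G2 : Matrix (Fin n) (Fin m) S}
    (h : Srj G1 G2) : ∃ f : Cok G1 →ₗ[S] Cok G2, Function.Surjective f := by
  obtain ⟨a, H, X, Y, h1, h2⟩ := h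
  refine ⟨Submodule.mapQ _ _ a.mulVecLin ?_, ?_⟩
  · rintro _ ⟨v, rfl⟩
    refine ⟨H.mulVec v, ?_⟩
    simp only [Matrix.mulVecLin_apply, Matrix.mulVec_mulVec, h1]
  · intro y
    obtain ⟨v, rfl⟩ := Submodule.Quotient.mk_surjective _ y
    refine ⟨Submodule.Quotient.mk (X.mulVec v), ?_⟩
    rw [Submodule.mapQ_apply, Submodule.Quotient.eq]
    refine ⟨-(Y.mulVec v), ?_⟩
    have : (a * X + G2 * Y).mulVec v = v := by rw [h2, Matrix.one_mulVec]
    simp only [Matrix.mulVecLin_apply, Matrix.mulVec_mulVec, Matrix.mulVec_neg]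
    rw [Matrix.add_mulVec] at this
    nth_rewrite 3 [← this]
    abel

lemma cok_equiv_of_srj {S : Type u} [CommRing S] {n m : ℕ} {G1 G2 : Matrix (Fin n) (Fin m) S}
    (h : Srj G1 G2) (h' : Srj G2 G1) : Nonempty (Cok G1 ≃ₗ[S] Cok G2) := by
  obtain ⟨f, hf⟩ := h.surj
  obtain ⟨g, hg⟩ := h'.surj
  have : Function.Injective (g ∘ₗ f) :=
    OrzechProperty.injective_of_surjective_endomorphism _ (hg.comp hf)
  exact ⟨LinearEquiv.ofBijective f ⟨Function.Injective.of_comp this, hf⟩⟩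

/-- a matrix killed modulo `G` factors through `G` -/
lemma factor {S : Type u} [CommRing S] {n m k : ℕ} (G : Matrix (Fin n) (Fin m) S)
    (Z : Matrix (Fin n) (Fin k) S)
    (h : ∀ v, (Submodule.Quotient.mk (Z.mulVec v) : Cok G) = 0) :
    ∃ W : Matrix (Fin m) (Fin k) S, Z = G * W := by
  have h' : ∀ j, ∃ w : Fin m → S, G.mulVec w = Z.mulVec (Pi.single j 1) := fun j => by
    have := h (Pi.single j 1)
    rw [Submodule.Quotient.mk_eq_zero] at this
    exact this
  choose w hw using h'
  refine ⟨Matrix.of fun i j => w j i, ?_⟩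
  ext i j
  have := congrFun (hw j) i
  simp only [Matrix.mulVec_single_one] at this
  rw [Matrix.mul_apply]
  exact this.symm

lemma lift_lin {S : Type u} [CommRing S] {n m : ℕ} {G1 G2 : Matrix (Fin n) (Fin m) S}
    (f : Cok G1 →ₗ[S] Cok G2) : ∃ a : Matrix (Fin n) (Fin n) S,
    ∀ v, f (Submodule.Quotient.mk v) = Submodule.Quotient.mk (a.mulVec v) := by
  have h : ∀ j : Fin n, ∃ w : Fin n → S, (Submodule.Quotient.mk w : Cok G2) =
      f (Submodule.Quotient.mk (Pi.single j 1)) := fun j => Submodule.Quotient.mk_surjective _ _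
  choose w hw using h
  refine ⟨Matrix.of fun i j => w j i, ?_⟩
  have : f ∘ₗ (LinearMap.range G1.mulVecLin).mkQ =
      (LinearMap.range G2.mulVecLin).mkQ ∘ₗ (Matrix.of fun i j => w j i).mulVecLin := by
    apply LinearMap.pi_ext'
    intro j
    ext
    simp only [LinearMap.comp_apply, LinearMap.single_apply, Submodule.mkQ_apply,
      Matrix.mulVecLin_apply, Matrix.mulVec_single_one]
    rw [← hw]
    rfl
  intro v
  exact LinearMap.congr_fun this v

lemma MI_of_equiv {S : Type u} [CommRing S] {n m : ℕ} {G1 G2 : Matrix (Fin n) (Fin m) S}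
    (f : Cok G1 ≃ₗ[S] Cok G2) : MI G1 G2 := by
  obtain ⟨a, ha⟩ := lift_lin f.toLinearMap
  obtain ⟨b, hb⟩ := lift_lin f.symm.toLinearMap
  simp only [LinearEquiv.coe_coe] at ha hb
  have z1 : ∀ v, (Submodule.Quotient.mk (G1.mulVec v) : Cok G1) = 0 := fun v => by
    rw [Submodule.Quotient.mk_eq_zero]; exact ⟨v, rfl⟩
  have z2 : ∀ v, (Submodule.Quotient.mk (G2.mulVec v) : Cok G2) = 0 := fun v => by
    rw [Submodule.Quotient.mk_eq_zero]; exact ⟨v, rfl⟩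
  obtain ⟨H, hH⟩ := factor G2 (a * G1) (fun v => by
    rw [← Matrix.mulVec_mulVec, ← ha, z1, map_zero])
  obtain ⟨K, hK⟩ := factor G1 (b * G2) (fun v => by
    rw [← Matrix.mulVec_mulVec, ← hb, z2, map_zero])
  obtain ⟨C, hC⟩ := factor G1 (b * a - 1) (fun v => by
    rw [Matrix.sub_mulVec, Submodule.Quotient.mk_sub, ← Matrix.mulVec_mulVec, ← hb, ← ha,
      Matrix.one_mulVec, f.symm_apply_apply, sub_self])
  obtain ⟨D, hD⟩ := factor G2 (a * b - 1) (fun v => by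
    rw [Matrix.sub_mulVec, Submodule.Quotient.mk_sub, ← Matrix.mulVec_mulVec, ← ha, ← hb,
      Matrix.one_mulVec, f.apply_symm_apply, sub_self])
  exact ⟨a, b, H, K, C, D, hH, hK, by rw [← hC]; abel, by rw [← hD]; abel⟩

/-- base change of a cokernel -/
lemma cok_baseChange (S S' : Type u) [CommRing S] [CommRing S'] [Algebra S S'] {n m : ℕ}
    (G : Matrix (Fin n) (Fin m) S) :
    Nonempty (S' ⊗[S] Cok G ≃ₗ[S'] Cok (G.map (algebraMap S S'))) := by
  set G' := G.map (algebraMap S S') with hG'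
  let F0 : (Fin n → S) →ₗ[S] Cok G' :=
    ((LinearMap.range G'.mulVecLin).mkQ.restrictScalars S) ∘ₗ
      ((Algebra.linearMap S S').compLeft (Fin n))
  have hF0 : LinearMap.range G.mulVecLin ≤ LinearMap.ker F0 := by
    rintro _ ⟨v, rfl⟩
    rw [LinearMap.mem_ker]
    change (Submodule.Quotient.mk _ : Cok G') = 0
    rw [Submodule.Quotient.mk_eq_zero]
    refine ⟨fun i => algebraMap S S' (v i), ?_⟩
    ext i
    simp [hG', Matrix.mulVec, dotProduct]
  let F : S' ⊗[S] Cok G →ₗ[S'] Cok G' :=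
    LinearMap.liftBaseChange S' (Submodule.liftQ _ F0 hF0)
  let E0 : (Fin n → S') →ₗ[S'] S' ⊗[S] Cok G :=
    Fintype.linearCombination S' (fun j => (1 : S') ⊗ₜ[S]
      (Submodule.Quotient.mk (Pi.single j 1) : Cok G))
  have hE0' : ∀ v : Fin n → S, E0 (fun i => algebraMap S S' (v i)) =
      (1 : S') ⊗ₜ[S] (Submodule.Quotient.mk v : Cok G) := by
    intro v
    have : v = ∑ j, v j • Pi.single j (1 : S) := by
      ext i; simp [Finset.sum_apply, Pi.single_apply]
    conv_rhs => rw [this]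
    change _ = (1 : S') ⊗ₜ[S] ((LinearMap.range G.mulVecLin).mkQ _)
    rw [map_sum, TensorProduct.tmul_sum]
    simp only [E0, Fintype.linearCombination_apply]
    refine Finset.sum_congr rfl fun j _ => ?_
    rw [map_smul, TensorProduct.tmul_smul, algebraMap_smul]
    rfl
  have hE0 : LinearMap.range G'.mulVecLin ≤ LinearMap.ker E0 := by
    rw [LinearMap.range_le_ker_iff]
    apply LinearMap.pi_ext'
    intro j
    ext
    simp only [LinearMap.comp_apply, LinearMap.single_apply, Matrix.mulVecLin_apply,
      Matrix.mulVec_single_one, LinearMap.zero_apply]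
    have : G'.col j = fun i => algebraMap S S' (G.col j i) := rfl
    rw [this, hE0']
    have : (Submodule.Quotient.mk (G.col j) : Cok G) = 0 := by
      rw [Submodule.Quotient.mk_eq_zero]
      exact ⟨Pi.single j 1, by simp⟩
    rw [this, TensorProduct.tmul_zero]
  let E : Cok G' →ₗ[S'] S' ⊗[S] Cok G := Submodule.liftQ _ E0 hE0
  have hF : ∀ (s : S') (v : Fin n → S), F (s ⊗ₜ (Submodule.Quotient.mk v : Cok G)) =
      s • (Submodule.Quotient.mk (fun i => algebraMap S S' (v i)) : Cok G') := by
    intro s v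
    simp only [F, LinearMap.liftBaseChange_tmul]
    rfl
  refine ⟨LinearEquiv.ofLinearMap F E ?_ ?_⟩
  · apply Submodule.linearMap_qext
    apply LinearMap.pi_ext'
    intro j
    ext
    change F (E0 (Pi.single j 1)) = Submodule.Quotient.mk (Pi.single j 1)
    have : (Pi.single j 1 : Fin n → S') = fun i => algebraMap S S' ((Pi.single j 1 : Fin n → S) i) := by
      ext i; by_cases h : i = j
      · subst h; simp
      · simp [h]
    rw [this, hE0', hF, one_smul]
  · apply LinearMap.ext
    intro x
    induction x with
    | zero => simp
    | add x y hx hy => rw [map_add, hx, hy, map_add]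
    | tmul s y =>
      obtain ⟨v, rfl⟩ := Submodule.Quotient.mk_surjective _ y
      rw [LinearMap.comp_apply, hF, map_smul]
      change s • E0 _ = _
      rw [hE0', TensorProduct.smul_tmul', smul_eq_mul, mul_one]
      rfl

lemma extended_iff (A R : Type u) [CommRing A] [CommRing R] [Algebra A R] (e : R →+* A)
    (he : ∀ a, e (algebraMap A R a) = a) {n m : ℕ} (G : Matrix (Fin n) (Fin m) R)
    (M : Type u) [AddCommGroup M] [Module R M] (hM : M ≃ₗ[R] Cok G) :
    ExtendedFromAlg A R M ↔
      Nonempty (Cok G ≃ₗ[R] Cok (G.map (fun r => algebraMap A R (e r)))) := by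
  obtain ⟨ι⟩ := cok_baseChange A R (G.map e)
  have hmap : (G.map e).map (algebraMap A R) = G.map (fun r => algebraMap A R (e r)) := by
    rw [Matrix.map_map]; rfl
  rw [hmap] at ι
  constructor
  · rintro ⟨N, _, _, ⟨f⟩⟩
    let _ : Algebra R A := e.toAlgebra
    have : IsScalarTower A R A := IsScalarTower.of_algebraMap_eq (fun a => (he a).symm)
    obtain ⟨κ⟩ := cok_baseChange R A G
    let g1 : A ⊗[R] (R ⊗[A] N) ≃ₗ[A] A ⊗[A] N :=
      TensorProduct.AlgebraTensorModule.cancelBaseChange A R A A N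
    let g2 : N ≃ₗ[A] Cok (G.map e) :=
      (TensorProduct.lid A N).symm ≪≫ₗ g1.symm ≪≫ₗ
        (LinearEquiv.baseChange R A _ _ (f.symm ≪≫ₗ hM)) ≪≫ₗ κ
    exact ⟨hM.symm ≪≫ₗ f ≪≫ₗ LinearEquiv.baseChange A R _ _ g2 ≪≫ₗ ι⟩
  · rintro ⟨f⟩
    exact ⟨Cok (G.map e), inferInstance, inferInstance, ⟨hM ≪≫ₗ f ≪≫ₗ ι.symm⟩⟩

lemma exists_cok (R M : Type u) [CommRing R] [AddCommGroup M] [Module R M]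
    [Module.FinitePresentation R M] :
    ∃ (n m : ℕ) (G : Matrix (Fin n) (Fin m) R), Nonempty (M ≃ₗ[R] Cok G) := by
  obtain ⟨n, K, f, hK⟩ := Module.FinitePresentation.exists_fin R M
  obtain ⟨m, s, hs⟩ := Submodule.fg_iff_exists_fin_generating_family.mp hK
  refine ⟨n, m, Matrix.of fun i j => s j i, ⟨f ≪≫ₗ Submodule.quotEquivOfEq _ _ ?_⟩⟩
  rw [Matrix.range_mulVecLin, ← hs]
  rfl

/-- the substitution `t ↦ c t` -/
noncomputable abbrev sg {B : Type u} [CommRing B] (c : B) : B[X] →+* B[X] :=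
  Polynomial.compRingHom (C c * X)

/-- put `t = 0` -/
noncomputable abbrev ev0 (B : Type u) [CommRing B] : B[X] →+* B := Polynomial.evalRingHom 0

lemma exists_X_smul {B : Type u} [CommRing B] {n m : ℕ} (Z : Matrix (Fin n) (Fin m) B[X])
    (h : Z.map (ev0 B) = 0) :
    ∃ W : Matrix (Fin n) (Fin m) B[X], Z = (X : B[X]) • W := by
  refine ⟨Matrix.of fun i j => (Z i j).divX, ?_⟩
  ext1 i j
  have h1 : (Z i j).coeff 0 = 0 := by
    rw [Polynomial.coeff_zero_eq_eval_zero]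
    exact congrFun (congrFun h i) j
  have h2 := Polynomial.divX_mul_X_add (Z i j)
  rw [h1, C_0, add_zero, mul_comm] at h2
  exact h2.symm

lemma X_smul_cancel {B : Type u} [CommRing B] {n m : ℕ} {Z W : Matrix (Fin n) (Fin m) B[X]}
    (h : (X : B[X]) • Z = (X : B[X]) • W) : Z = W := by
  ext1 i j
  have := congrFun (congrFun h i) j
  exact Polynomial.isRegular_X.left this

lemma sg_sg {B : Type u} [CommRing B] (c d : B) (p : B[X]) : sg c (sg d p) = sg (c * d) p := by
  simp only [sg, Polynomial.coe_compRingHom_apply, Polynomial.comp_assoc]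
  congr 1
  simp only [mul_comp, C_comp, X_comp, C_mul]
  ring

lemma sg_C {B : Type u} [CommRing B] (c : B) (b : B) : sg c (C b) = C b := by simp

lemma sg_X {B : Type u} [CommRing B] (c : B) : sg c X = C c * X := by simp

lemma map_sg {B B' : Type u} [CommRing B] [CommRing B'] (φ : B →+* B') (c : B) (p : B[X]) :
    mapRingHom φ (sg c p) = sg (φ c) (mapRingHom φ p) := by
  simp [Polynomial.map_comp]

lemma ev0_sg {B : Type u} [CommRing B] (c : B) (p : B[X]) : ev0 B (sg c p) = ev0 B p := by
  simp

lemma map_one' {S S' : Type u} [CommRing S] [CommRing S'] (f : S →+* S') (n : ℕ) :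
    (1 : Matrix (Fin n) (Fin n) S).map f = 1 := Matrix.map_one _ (map_zero f) (map_one f)

lemma map_smul' {S S' : Type u} [CommRing S] [CommRing S'] (f : S →+* S') {n m : ℕ} (s : S)
    (Z : Matrix (Fin n) (Fin m) S) : (s • Z).map f = f s • Z.map f := by
  ext i j; simp

lemma map_add' {S S' : Type u} [CommRing S] [CommRing S'] (f : S →+* S') {n m : ℕ}
    (Z W : Matrix (Fin n) (Fin m) S) : (Z + W).map f = Z.map f + W.map f := by
  ext i j; simp

lemma map_sub' {S S' : Type u} [CommRing S] [CommRing S'] (f : S →+* S') {n m : ℕ}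
    (Z W : Matrix (Fin n) (Fin m) S) : (Z - W).map f = Z.map f - W.map f := by
  ext i j; simp

lemma descent {B B' : Type u} [CommRing B] [CommRing B'] (φ : B →+* B') (T : Submonoid B)
    (h1 : ∀ (ι : Type) [Finite ι] (y : ι → B'[X]), ∃ d ∈ T, ∃ x : ι → B[X],
      ∀ i, mapRingHom φ (x i) = C (φ d) * y i)
    (h2 : ∀ (ι : Type) [Finite ι] (x : ι → B[X]), (∀ i, mapRingHom φ (x i) = 0) →
      ∃ d ∈ T, ∀ i, C d * x i = 0)
    {n m : ℕ} (G : Matrix (Fin n) (Fin m) B[X])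
    (α β : Matrix (Fin n) (Fin n) B'[X]) (H : Matrix (Fin m) (Fin m) B'[X])
    (Y : Matrix (Fin m) (Fin n) B'[X])
    (e1 : (1 + (X : B'[X]) • α) * (G.map (C.comp (ev0 B))).map (mapRingHom φ) =
      G.map (mapRingHom φ) * (1 + (X : B'[X]) • H))
    (e2 : (1 + (X : B'[X]) • α) * (1 + (X : B'[X]) • β) +
      G.map (mapRingHom φ) * ((X : B'[X]) • Y) = 1) :
    ∃ c ∈ T, Srj (G.map (C.comp (ev0 B))) (G.map (sg c)) := by
  obtain ⟨d, hd, x, hx⟩ := h1 (((Fin n × Fin n) ⊕ (Fin n × Fin n)) ⊕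
    ((Fin m × Fin m) ⊕ (Fin m × Fin n)))
    (Sum.elim (Sum.elim (fun p => α p.1 p.2) (fun p => β p.1 p.2))
      (Sum.elim (fun p => H p.1 p.2) (fun p => Y p.1 p.2)))
  let α2 : Matrix (Fin n) (Fin n) B[X] := Matrix.of fun i j => x (Sum.inl (Sum.inl (i, j)))
  let β2 : Matrix (Fin n) (Fin n) B[X] := Matrix.of fun i j => x (Sum.inl (Sum.inr (i, j)))
  let H2 : Matrix (Fin m) (Fin m) B[X] := Matrix.of fun i j => x (Sum.inr (Sum.inl (i, j)))
  let Y2 : Matrix (Fin m) (Fin n) B[X] := Matrix.of fun i j => x (Sum.inr (Sum.inr (i, j)))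
  have hα : α2.map (mapRingHom φ) = C (φ d) • α := by
    ext1 i j; exact hx (Sum.inl (Sum.inl (i, j)))
  have hβ : β2.map (mapRingHom φ) = C (φ d) • β := by
    ext1 i j; exact hx (Sum.inl (Sum.inr (i, j)))
  have hH : H2.map (mapRingHom φ) = C (φ d) • H := by
    ext1 i j; exact hx (Sum.inr (Sum.inl (i, j)))
  have hY : Y2.map (mapRingHom φ) = C (φ d) • Y := by
    ext1 i j; exact hx (Sum.inr (Sum.inr (i, j)))
  have key : ∀ {k l : ℕ} (P2 : Matrix (Fin k) (Fin l) B[X]) (P : Matrix (Fin k) (Fin l) B'[X]),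
      P2.map (mapRingHom φ) = C (φ d) • P →
      ((X : B[X]) • P2.map (sg d)).map (mapRingHom φ) = ((X : B'[X]) • P).map (sg (φ d)) := by
    intro k l P2 P hP
    ext1 i j
    have := congrFun (congrFun hP i) j
    simp only [Matrix.map_apply, Matrix.smul_apply, smul_eq_mul, map_mul] at this ⊢
    rw [map_sg, this, map_mul, sg_C, sg_X]
    simp only [coe_mapRingHom, map_X]
    ring
  set G0 := G.map (C.comp (ev0 B)) with hG0
  set a1 := 1 + (X : B[X]) • α2.map (sg d)
  set b1 := 1 + (X : B[X]) • β2.map (sg d)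
  set H1 := 1 + (X : B[X]) • H2.map (sg d)
  set Y1 := (X : B[X]) • Y2.map (sg d)
  set Gd := G.map (sg d) with hGd
  have ma : a1.map (mapRingHom φ) = (1 + (X : B'[X]) • α).map (sg (φ d)) := by
    simp only [a1]; rw [map_add', map_add', key _ _ hα, map_one', map_one']
  have mb : b1.map (mapRingHom φ) = (1 + (X : B'[X]) • β).map (sg (φ d)) := by
    simp only [b1]; rw [map_add', map_add', key _ _ hβ, map_one', map_one']
  have mH : H1.map (mapRingHom φ) = (1 + (X : B'[X]) • H).map (sg (φ d)) := by
    simp only [H1]; rw [map_add', map_add', key _ _ hH, map_one', map_one']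
  have mY : Y1.map (mapRingHom φ) = ((X : B'[X]) • Y).map (sg (φ d)) := key _ _ hY
  have mG : Gd.map (mapRingHom φ) = (G.map (mapRingHom φ)).map (sg (φ d)) := by
    ext1 i j; exact map_sg φ d (G i j)
  have mG0 : G0.map (mapRingHom φ) = (G0.map (mapRingHom φ)).map (sg (φ d)) := by
    ext1 i j; simp [hG0]
  have ea : a1.map (ev0 B) = 1 := by
    simp only [a1]; rw [map_add', map_smul', map_one']; simp
  have eb : b1.map (ev0 B) = 1 := by
    simp only [b1]; rw [map_add', map_smul', map_one']; simp
  have eH : H1.map (ev0 B) = 1 := by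
    simp only [H1]; rw [map_add', map_smul', map_one']; simp
  have eY : Y1.map (ev0 B) = 0 := by
    simp only [Y1]; rw [map_smul']; simp
  have eG : Gd.map (ev0 B) = G0.map (ev0 B) := by
    ext1 i j; simp [hG0, hGd]
  obtain ⟨W1, hW1⟩ := exists_X_smul (a1 * G0 - Gd * H1) (by
    rw [map_sub', Matrix.map_mul, Matrix.map_mul, ea, eH, eG]; simp)
  obtain ⟨W2, hW2⟩ := exists_X_smul (a1 * b1 + Gd * Y1 - 1) (by
    rw [map_sub', map_add', Matrix.map_mul, Matrix.map_mul, ea, eb, eY, map_one']; simp)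
  have kW1 : W1.map (mapRingHom φ) = 0 := by
    apply X_smul_cancel
    have : mapRingHom φ X = X := by simp
    rw [smul_zero, ← this, ← map_smul', ← hW1, map_sub', Matrix.map_mul, Matrix.map_mul, ma, mG,
      mH, mG0, ← Matrix.map_mul, ← Matrix.map_mul, e1, sub_self]
  have kW2 : W2.map (mapRingHom φ) = 0 := by
    apply X_smul_cancel
    have : mapRingHom φ X = X := by simp
    rw [smul_zero, ← this, ← map_smul', ← hW2, map_sub', map_add', Matrix.map_mul,
      Matrix.map_mul, ma, mG, mb, mY, ← Matrix.map_mul, ← Matrix.map_mul, ← map_add', e2,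
      map_one', map_one', sub_self]
  obtain ⟨e, he, hke⟩ := h2 ((Fin n × Fin m) ⊕ (Fin n × Fin n))
    (Sum.elim (fun p => W1 p.1 p.2) (fun p => W2 p.1 p.2)) (by
      rintro (⟨i, j⟩ | ⟨i, j⟩)
      · exact congrFun (congrFun kW1 i) j
      · exact congrFun (congrFun kW2 i) j)
  have kill : ∀ {k l : ℕ} (W : Matrix (Fin k) (Fin l) B[X]), (∀ i j, C e * W i j = 0) →
      ((X : B[X]) • W).map (sg e) = 0 := by
    intro k l W hW
    ext1 i j
    rw [Matrix.map_apply, Matrix.smul_apply, smul_eq_mul, map_mul, sg_X, mul_comm (C e) X,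
      mul_assoc, ← sg_C e e, ← map_mul, hW, map_zero, mul_zero]
    rfl
  have f1 := kill W1 (fun i j => hke (Sum.inl (i, j)))
  have f2 := kill W2 (fun i j => hke (Sum.inr (i, j)))
  rw [← hW1, map_sub', Matrix.map_mul, Matrix.map_mul, sub_eq_zero] at f1
  rw [← hW2, map_sub', map_add', Matrix.map_mul, Matrix.map_mul, map_one', sub_eq_zero] at f2
  have g1 : G0.map (sg e) = G0 := by
    ext1 i j; simp [hG0]
  have g2 : Gd.map (sg e) = G.map (sg (e * d)) := by
    ext1 i j; exact sg_sg e d (G i j)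
  rw [g1, g2] at f1
  rw [g2] at f2
  exact ⟨e * d, T.mul_mem he hd, _, _, _, _, f1, f2⟩

/-- the formal path between the two ends -/
lemma path {R' B' : Type u} [CommRing R'] [CommRing B'] {n m : ℕ}
    (G E : Matrix (Fin n) (Fin m) R') (h : MI G E) (p : R' →+* B') (q : R' →+* B'[X])
    (hpq : ∀ r, ev0 B' (q r) = p r) (hE : E.map q = (E.map p).map C) :
    ∃ (α β : Matrix (Fin n) (Fin n) B'[X]) (H : Matrix (Fin m) (Fin m) B'[X])
      (Y : Matrix (Fin m) (Fin n) B'[X]),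
      (1 + (X : B'[X]) • α) * (G.map p).map C = G.map q * (1 + (X : B'[X]) • H) ∧
      (1 + (X : B'[X]) • α) * (1 + (X : B'[X]) • β) + G.map q * ((X : B'[X]) • Y) = 1 := by
  obtain ⟨a, b, H, K, D, D', h1, h2, h3, h4⟩ := h
  have mapm : ∀ (f : R' →+* B'[X]),
      a.map f * G.map f = E.map f * H.map f ∧ b.map f * E.map f = G.map f * K.map f ∧
      b.map f * a.map f = 1 + G.map f * D.map f ∧ a.map f * b.map f = 1 + E.map f * D'.map f := by
    intro f
    refine ⟨?_, ?_, ?_, ?_⟩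
    · rw [← Matrix.map_mul, h1, Matrix.map_mul]
    · rw [← Matrix.map_mul, h2, Matrix.map_mul]
    · rw [← Matrix.map_mul, h3, map_add', Matrix.map_mul, map_one']
    · rw [← Matrix.map_mul, h4, map_add', Matrix.map_mul, map_one']
  obtain ⟨q1, q2, q3, q4⟩ := mapm q
  obtain ⟨p1, p2, p3, p4⟩ := mapm (C.comp p)
  have hE' : E.map q = E.map (C.comp p) := by rw [hE, Matrix.map_map]; rfl
  have hG' : (G.map p).map C = G.map (C.comp p) := by rw [Matrix.map_map]; rfl
  rw [hG']
  have ev : ∀ {k l : ℕ} (Z : Matrix (Fin k) (Fin l) R'),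
      (Z.map q).map (ev0 B') = (Z.map (C.comp p)).map (ev0 B') := by
    intro k l Z
    ext1 i j
    simp only [Matrix.map_apply, hpq, RingHom.comp_apply]
    simp
  have evE : (E.map (C.comp p)).map (ev0 B') = E.map p := by
    ext1 i j; simp
  have nzd : ∀ {k : ℕ} (Z : Matrix (Fin n) (Fin k) B'[X]) (W : Matrix (Fin m) (Fin k) B'[X]),
      (X : B'[X]) • Z = G.map q * W → ∃ W' : Matrix (Fin m) (Fin k) B'[X], Z = G.map q * W' := by
    intro k Z W hZ
    set V := H.map q * W with hV
    have s1 : (X : B'[X]) • (a.map q * Z) = E.map q * V := by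
      rw [← Matrix.mul_smul, hZ, ← Matrix.mul_assoc, q1, Matrix.mul_assoc]
    set V0 := (V.map (ev0 B')).map (C : B' →+* B'[X]) with hV0
    obtain ⟨V1, hV1⟩ := exists_X_smul (V - V0) (by
      ext1 i j; simp [hV0])
    have s2 : E.map q * V0 = 0 := by
      rw [hV0, hE, ← Matrix.map_mul]
      have := congrArg (fun M => Matrix.map M (ev0 B')) s1
      simp only [map_smul', Matrix.map_mul] at this
      rw [ev E, evE] at this
      rw [← this]
      ext1 i j
      simp
    have s3 : a.map q * Z = E.map q * V1 := by
      apply X_smul_cancel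
      rw [s1, ← Matrix.mul_smul, ← hV1, Matrix.mul_sub, s2, sub_zero]
    refine ⟨K.map q * V1 - D.map q * Z, ?_⟩
    rw [Matrix.mul_sub, ← Matrix.mul_assoc, ← q2, Matrix.mul_assoc, ← s3, ← Matrix.mul_assoc,
      ← Matrix.mul_assoc, ← Matrix.sub_mul, q3]
    simp
  rw [hE'] at q1 q2 q4
  generalize hqG : G.map q = G1 at *
  generalize hpG : G.map (C.comp p) = Gp at *
  generalize hEp : E.map (C.comp p) = E0 at *
  have evG : G1.map (ev0 B') = Gp.map (ev0 B') := by rw [← hqG, ← hpG, ev]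
  have eva := ev a
  have evb := ev b
  have evD := ev D
  generalize a.map q = aq at *
  generalize a.map (C.comp p) = ap at *
  generalize b.map q = bq at *
  generalize b.map (C.comp p) = bp at *
  generalize D.map q = Dq at *
  generalize D.map (C.comp p) = Dp at *
  generalize H.map (C.comp p) = Hp at *
  generalize K.map q = Kq at *
  generalize D'.map (C.comp p) = D'p at *
  have base : (bp * ap - Gp * Dp).map (ev0 B') = 1 := by
    rw [p3, add_sub_cancel_right, map_one']
  obtain ⟨α, hα⟩ := exists_X_smul (bq * ap - G1 * Dp - 1) (by
    rw [map_sub', map_sub', Matrix.map_mul, Matrix.map_mul, evG, evb, ← Matrix.map_mul,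
      ← Matrix.map_mul, ← map_sub', base, map_one', sub_self])
  obtain ⟨β, hβ⟩ := exists_X_smul (bp * aq - Gp * Dq - 1) (by
    rw [map_sub', map_sub', Matrix.map_mul, Matrix.map_mul, evD, eva, ← Matrix.map_mul,
      ← Matrix.map_mul, ← map_sub', base, map_one', sub_self])
  have hα' : 1 + (X : B'[X]) • α = bq * ap - G1 * Dp := by rw [← hα]; abel
  have hβ' : 1 + (X : B'[X]) • β = bp * aq - Gp * Dq := by rw [← hβ]; abel
  have t1 : (bq * ap - G1 * Dp) * Gp = G1 * (Kq * Hp - Dp * Gp) := by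
    rw [Matrix.sub_mul, Matrix.mul_assoc, p1, ← Matrix.mul_assoc, q2, Matrix.mul_sub]
    simp only [Matrix.mul_assoc]
  obtain ⟨Z1, hZ1⟩ := exists_X_smul ((bq * ap - G1 * Dp) * Gp - G1) (by
    rw [map_sub', Matrix.map_mul, ← hα', map_add', map_smul', map_one', evG]; simp)
  obtain ⟨W1, hW1⟩ := nzd Z1 (Kq * Hp - Dp * Gp - 1) (by
    rw [← hZ1, t1, Matrix.mul_sub G1 (Kq * Hp - Dp * Gp), Matrix.mul_one])
  have t2 : (bq * ap - G1 * Dp) * (bp * aq - Gp * Dq) =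
      1 + G1 * (Dq + Kq * D'p * aq - Kq * Hp * Dq - Dp * (bp * aq - Gp * Dq)) := by
    have u1 : bq * ap * (bp * aq) = bq * aq + G1 * (Kq * D'p * aq) := by
      calc bq * ap * (bp * aq) = bq * (ap * bp) * aq := by simp only [Matrix.mul_assoc]
        _ = bq * aq + (bq * E0) * D'p * aq := by
          rw [p4]; simp only [Matrix.mul_add, Matrix.add_mul, Matrix.mul_one, Matrix.mul_assoc]
        _ = _ := by rw [q2]; simp only [Matrix.mul_assoc]
    have u2 : bq * ap * (Gp * Dq) = G1 * (Kq * Hp * Dq) := by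
      calc bq * ap * (Gp * Dq) = bq * (ap * Gp) * Dq := by simp only [Matrix.mul_assoc]
        _ = (bq * E0) * Hp * Dq := by rw [p1]; simp only [Matrix.mul_assoc]
        _ = _ := by rw [q2]; simp only [Matrix.mul_assoc]
    rw [Matrix.sub_mul, Matrix.mul_sub (bq * ap), u1, u2, q3, Matrix.mul_sub G1,
      Matrix.mul_sub G1, Matrix.mul_add G1, Matrix.mul_assoc G1 Dp]
    abel
  obtain ⟨Z2, hZ2⟩ := exists_X_smul ((bq * ap - G1 * Dp) * (bp * aq - Gp * Dq) - 1) (by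
    rw [map_sub', Matrix.map_mul, ← hα', ← hβ', map_add', map_smul', map_one', map_add',
      map_smul', map_one']; simp)
  obtain ⟨W2, hW2⟩ := nzd Z2 _ (by rw [← hZ2, t2, add_sub_cancel_left])
  refine ⟨α, β, W1, -W2, ?_, ?_⟩
  · rw [hα', Matrix.mul_add, Matrix.mul_one, Matrix.mul_smul, ← hW1, ← hZ1]
    abel
  · rw [hα', hβ', smul_neg, Matrix.mul_neg, Matrix.mul_smul, ← hW2, ← hZ2]
    abel

lemma exists_psi (A : Type u) [CommRing A] (R : Type u) [CommRing R] [Algebra A R]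
    (𝒜 : ℕ → Submodule A R) [GradedAlgebra 𝒜]
    (h0 : 𝒜 0 = LinearMap.range (Algebra.linearMap A R)) :
    ∃ ψ : R →ₐ[A] R[X], (∀ r, (ψ r).eval 1 = r) ∧
      ∀ r, ∃ a : A, algebraMap A R a = (ψ r).eval 0 := by
  let f : ∀ i, 𝒜 i →ₗ[A] R[X] := fun i =>
    ((Polynomial.monomial i).restrictScalars A) ∘ₗ (𝒜 i).subtype
  have hone : f 0 (GradedMonoid.GOne.one (A := fun i => 𝒜 i)) = 1 := by simp [f]
  have hmul : ∀ {i j : ℕ} (ai : 𝒜 i) (aj : 𝒜 j),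
      f (i + j) (GradedMonoid.GMul.mul (A := fun i => 𝒜 i) ai aj) = f i ai * f j aj := by
    intro i j ai aj
    simp [f, Polynomial.monomial_mul_monomial]
  let ψ : R →ₐ[A] R[X] := (DirectSum.toAlgebra A (fun i => 𝒜 i) f hone hmul).comp
    (DirectSum.decomposeAlgEquiv 𝒜).toAlgHom
  have hψ : ∀ i (x : 𝒜 i), ψ x = monomial i (x : R) := by
    intro i x
    change (DirectSum.toAlgebra A (fun i => 𝒜 i) f hone hmul) (DirectSum.decompose 𝒜 (x : R)) = _
    rw [DirectSum.decompose_coe]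
    exact DirectSum.toSemiring_of (fun i => (f i).toAddMonoidHom) hone hmul i x
  refine ⟨ψ, ?_, ?_⟩
  · intro r
    induction r using DirectSum.Decomposition.inductionOn 𝒜 with
    | zero => simp
    | homogeneous x => rw [hψ]; simp
    | add x y hx hy => rw [map_add, eval_add, hx, hy]
  · intro r
    induction r using DirectSum.Decomposition.inductionOn 𝒜 with
    | zero => exact ⟨0, by simp⟩
    | @homogeneous i x =>
      rw [hψ]
      rcases i with _ | i
      · have : (x : R) ∈ LinearMap.range (Algebra.linearMap A R) := h0.le x.2
        obtain ⟨a, ha⟩ := this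
        exact ⟨a, by simpa using ha⟩
      · exact ⟨0, by simp⟩
    | add x y hx hy =>
      obtain ⟨a, ha⟩ := hx
      obtain ⟨b, hb⟩ := hy
      exact ⟨a + b, by rw [map_add, map_add, eval_add, ha, hb]⟩

lemma exists_eps (A : Type u) [CommRing A] (R : Type u) [CommRing R] [Algebra A R]
    (hinj : Function.Injective (algebraMap A R)) (ψ : R →ₐ[A] R[X])
    (h : ∀ r, ∃ a : A, algebraMap A R a = (ψ r).eval 0) :
    ∃ ε : R →+* A, (∀ r, algebraMap A R (ε r) = (ψ r).eval 0) ∧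
      ∀ a, ε (algebraMap A R a) = a := by
  choose e he using h
  have hh : ∀ r, algebraMap A R (e r) = (ev0 R) (ψ r) := he
  let ε : R →+* A :=
    { toFun := e
      map_one' := hinj (by rw [hh]; simp)
      map_mul' := fun x y => hinj (by rw [map_mul, hh, hh, hh, map_mul, map_mul])
      map_zero' := hinj (by rw [hh]; simp)
      map_add' := fun x y => hinj (by rw [map_add, hh, hh, hh, map_add, map_add]) }
  refine ⟨ε, he, fun a => hinj ?_⟩
  change algebraMap A R (e _) = _
  rw [hh, AlgHom.commutes, Polynomial.algebraMap_apply]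
  simp

/-- specialise the path at the parameter `x` -/
noncomputable def fx {A R : Type u} [CommRing A] [CommRing R] [Algebra A R] (ψ : R →ₐ[A] R[X])
    {B : Type u} [CommRing B] [Algebra R B] (x : B) : R →+* B :=
  (Polynomial.aeval x : R[X] →ₐ[R] B).toRingHom.comp ψ.toRingHom

lemma fx_apply {A R : Type u} [CommRing A] [CommRing R] [Algebra A R] (ψ : R →ₐ[A] R[X])
    {B : Type u} [CommRing B] [Algebra R B] (x : B) (r : R) :
    fx ψ x r = Polynomial.aeval x (ψ r) := rfl

/-- the Quillen ideal -/
noncomputable def QI {A R : Type u} [CommRing A] [CommRing R] [Algebra A R] (ψ : R →ₐ[A] R[X])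
    {n m : ℕ} (G : Matrix (Fin n) (Fin m) R) : Ideal A where
  carrier := {c | ∀ (B : Type u) [CommRing B] [Algebra R B] (s t : B),
    Srj (G.map (fx ψ s)) (G.map (fx ψ (s + algebraMap R B (algebraMap A R c) * t)))}
  zero_mem' := by
    intro B _ _ s t
    simp only [map_zero, zero_mul, add_zero]
    exact Srj.refl _
  add_mem' := by
    intro c d hc hd B _ _ s t
    have := (hc B s t).trans (hd B (s + algebraMap R B (algebraMap A R c) * t) t)
    rw [map_add, map_add, add_mul, ← add_assoc]
    exact this
  smul_mem' := by
    intro a c hc B _ _ s t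
    have := hc B s (algebraMap R B (algebraMap A R a) * t)
    rw [smul_eq_mul, map_mul, map_mul, mul_comm (algebraMap R B (algebraMap A R a)), mul_assoc]
    exact this

lemma loc_fam {R R' : Type u} [CommRing R] [CommRing R'] [Algebra R R'] (T : Submonoid R)
    [IsLocalization T R'] :
    (∀ (ι : Type) [Finite ι] (y : ι → R'[X][X]), ∃ d ∈ T.map (C : R →+* R[X]),
      ∃ x : ι → R[X][X], ∀ i, mapRingHom (mapRingHom (algebraMap R R')) (x i) =
        C (mapRingHom (algebraMap R R') d) * y i) ∧
    (∀ (ι : Type) [Finite ι] (x : ι → R[X][X]),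
      (∀ i, mapRingHom (mapRingHom (algebraMap R R')) (x i) = 0) →
      ∃ d ∈ T.map (C : R →+* R[X]), ∀ i, C d * x i = 0) := by
  let _ : Algebra R[X] R'[X] := Polynomial.algebra R R'
  have i1 : IsLocalization (T.map (C : R →+* R[X])) R'[X] := Polynomial.isLocalization T R'
  let _ : Algebra R[X][X] R'[X][X] := Polynomial.algebra R[X] R'[X]
  have i2 : IsLocalization ((T.map (C : R →+* R[X])).map (C : R[X] →+* R[X][X])) R'[X][X] :=
    Polynomial.isLocalization _ _
  have a2 : ∀ x, algebraMap R[X][X] R'[X][X] x =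
    mapRingHom (mapRingHom (algebraMap R R')) x := fun x => rfl
  constructor
  · intro ι _ y
    obtain ⟨⟨_, ⟨d, hd, rfl⟩⟩, hb⟩ := IsLocalization.exist_integer_multiples_of_finite
      ((T.map (C : R →+* R[X])).map (C : R[X] →+* R[X][X])) y
    choose x hx using hb
    refine ⟨d, hd, x, fun i => ?_⟩
    rw [← a2, hx, Algebra.smul_def, a2]
    congr 1
    exact Polynomial.map_C _
  · intro ι _ x hx
    have : ∀ i, ∃ d ∈ T.map (C : R →+* R[X]), C d * x i = 0 := fun i => by
      obtain ⟨⟨_, ⟨d, hd, rfl⟩⟩, hb⟩ := (IsLocalization.map_eq_zero_iff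
        ((T.map (C : R →+* R[X])).map (C : R[X] →+* R[X][X])) R'[X][X] (x i)).mp (hx i)
      exact ⟨d, hd, hb⟩
    choose d hd hdx using this
    cases nonempty_fintype ι
    refine ⟨∏ i, d i, Submonoid.prod_mem _ fun i _ => hd i, fun i => ?_⟩
    obtain ⟨e, he⟩ := Finset.dvd_prod_of_mem d (Finset.mem_univ i)
    rw [he, C_mul, mul_comm (C (d i)), mul_assoc, hdx, mul_zero]

lemma mem_QI_of_loc {A R : Type u} [CommRing A] [CommRing R] [Algebra A R] (ψ : R →ₐ[A] R[X])
    (ε : R →+* A) {n m : ℕ} (G : Matrix (Fin n) (Fin m) R) (T : Submonoid A)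
    (R' : Type u) [CommRing R'] [Algebra R R']
    [IsLocalization (Algebra.algebraMapSubmonoid R T) R']
    (h : MI (G.map (algebraMap R R'))
      (G.map (fun r => algebraMap R R' (algebraMap A R (ε r))))) :
    ∃ c ∈ T, c ∈ QI ψ G := by
  have hu : ∀ y : Algebra.algebraMapSubmonoid R T,
      IsUnit (((mapRingHom (algebraMap R R')).comp ψ.toRingHom) y) := by
    rintro ⟨_, ⟨t, ht, rfl⟩⟩
    have : ((mapRingHom (algebraMap R R')).comp ψ.toRingHom) (algebraMap A R t) =
        C (algebraMap R R' (algebraMap A R t)) := by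
      change mapRingHom (algebraMap R R') (ψ (algebraMap A R t)) = _
      rw [AlgHom.commutes, Polynomial.algebraMap_apply]
      simp
    change IsUnit (((mapRingHom (algebraMap R R')).comp ψ.toRingHom) (algebraMap A R t))
    rw [this]
    exact (IsLocalization.map_units R' (⟨algebraMap A R t, ⟨t, ht, rfl⟩⟩ :
      Algebra.algebraMapSubmonoid R T)).map C
  let p : R' →+* R'[X] := IsLocalization.lift hu
  have hp : ∀ r, p (algebraMap R R' r) = mapRingHom (algebraMap R R') (ψ r) :=
    fun r => IsLocalization.lift_eq hu r
  let q0 : R'[X] →+* R'[X][X] := eval₂RingHom (C.comp C) (C X + X)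
  let q : R' →+* R'[X][X] := q0.comp p
  have hpq : ∀ r, ev0 R'[X] (q r) = p r := by
    have : (ev0 R'[X]).comp q0 = RingHom.id _ := by
      apply Polynomial.ringHom_ext <;> simp [q0]
    intro r
    exact RingHom.congr_fun this (p r)
  have hpA : ∀ a : A, p (algebraMap R R' (algebraMap A R a)) =
      C (algebraMap R R' (algebraMap A R a)) := by
    intro a
    rw [hp, AlgHom.commutes, Polynomial.algebraMap_apply]
    simp
  obtain ⟨α, β, H, Y, e1, e2⟩ := path _ _ h p q hpq (by
    ext1 i j
    simp only [Matrix.map_apply, q, RingHom.comp_apply, hpA]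
    simp [q0])
  obtain ⟨l1, l2⟩ := loc_fam (R' := R') (Algebra.algebraMapSubmonoid R T)
  set Gst : Matrix (Fin n) (Fin m) R[X][X] := G.map (fx ψ (C X + X)) with hGst
  have ev_st : ∀ f : R[X], ev0 R[X] (aeval (C X + X : R[X][X]) f) = f := by
    intro f
    have : (ev0 R[X]).comp (aeval (C X + X : R[X][X]) : R[X] →ₐ[R] R[X][X]).toRingHom =
        RingHom.id _ := by
      apply Polynomial.ringHom_ext
      · intro a; simp
      · simp
    exact RingHom.congr_fun this f
  have m1 : Gst.map (mapRingHom (mapRingHom (algebraMap R R'))) =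
      (G.map (algebraMap R R')).map q := by
    have : (mapRingHom (mapRingHom (algebraMap R R'))).comp
        (aeval (C X + X : R[X][X]) : R[X] →ₐ[R] R[X][X]).toRingHom =
        q0.comp (mapRingHom (algebraMap R R')) := by
      apply Polynomial.ringHom_ext
      · intro a; simp [q0]
      · simp [q0]
    ext1 i j
    simp only [hGst, Matrix.map_apply, q, RingHom.comp_apply, hp]
    exact RingHom.congr_fun this (ψ (G i j))
  have m2 : (Gst.map (C.comp (ev0 R[X]))).map (mapRingHom (mapRingHom (algebraMap R R'))) =
      ((G.map (algebraMap R R')).map p).map C := by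
    ext1 i j
    simp only [hGst, Matrix.map_apply, RingHom.comp_apply, hp, fx_apply, ev_st]
    exact Polynomial.map_C _
  rw [← m1, ← m2] at e1
  rw [← m1] at e2
  obtain ⟨_, ⟨_, ⟨c, hc, rfl⟩, rfl⟩, hS⟩ := descent _ _ l1 l2 Gst α β H Y e1 e2
  refine ⟨c, hc, ?_⟩
  intro B _ _ s t
  let h : R[X][X] →+* B := eval₂RingHom (aeval s : R[X] →ₐ[R] B).toRingHom t
  have := hS.map h
  convert! this using 1
  · ext1 i j
    simp only [hGst, Matrix.map_apply, RingHom.comp_apply, fx_apply, ev_st]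
    simp [h]
  · ext1 i j
    have key : (h.comp (sg (C (algebraMap A R c)))).comp
        (aeval (C X + X : R[X][X]) : R[X] →ₐ[R] R[X][X]).toRingHom =
        (aeval (s + algebraMap R B (algebraMap A R c) * t) : R[X] →ₐ[R] B).toRingHom := by
      apply Polynomial.ringHom_ext
      · intro a; simp [h]
      · simp [h]
    exact (RingHom.congr_fun key (ψ (G i j))).symm

lemma equiv_of_mem_QI {A R : Type u} [CommRing A] [CommRing R] [Algebra A R] (ψ : R →ₐ[A] R[X])
    (h1 : ∀ r, (ψ r).eval 1 = r)
    (ε : R →+* A) (hε : ∀ r, algebraMap A R (ε r) = (ψ r).eval 0)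
    {n m : ℕ} (G : Matrix (Fin n) (Fin m) R)
    (R' : Type u) [CommRing R'] [Algebra R R'] (c : A) (hc : c ∈ QI ψ G)
    (hu : IsUnit (algebraMap R R' (algebraMap A R c))) :
    Nonempty (Cok (G.map (algebraMap R R')) ≃ₗ[R']
      Cok (G.map (fun r => algebraMap R R' (algebraMap A R (ε r))))) := by
  obtain ⟨w, hw⟩ := hu.exists_right_inv
  have f1 : G.map (fx ψ (1 : R')) = G.map (algebraMap R R') := by
    ext1 i j
    have := Polynomial.aeval_algebraMap_apply R' (1 : R) (ψ (G i j))
    rw [map_one] at this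
    simp only [Matrix.map_apply, fx_apply, this, Polynomial.coe_aeval_eq_eval, h1]
  have f0 : G.map (fx ψ (0 : R')) =
      G.map (fun r => algebraMap R R' (algebraMap A R (ε r))) := by
    ext1 i j
    have := Polynomial.aeval_algebraMap_apply R' (0 : R) (ψ (G i j))
    rw [map_zero] at this
    simp only [Matrix.map_apply, fx_apply, this, Polynomial.coe_aeval_eq_eval, hε]
  have s1 := hc R' 0 w
  have s2 := hc R' 1 (-w)
  rw [hw, zero_add, f0, f1] at s1
  rw [mul_neg, hw, add_neg_cancel, f0, f1] at s2
  exact cok_equiv_of_srj s2 s1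

/-- localized version of the criterion -/
lemma extended_loc_iff {A R : Type u} [CommRing A] [CommRing R] [Algebra A R]
    (ε : R →+* A) (hε : ∀ a, ε (algebraMap A R a) = a)
    {n m : ℕ} (G : Matrix (Fin n) (Fin m) R)
    (M : Type u) [AddCommGroup M] [Module R M] (hM : M ≃ₗ[R] Cok G) (T : Submonoid A)
    (A' R' M' : Type u) [CommRing A'] [CommRing R'] [AddCommGroup M']
    [Algebra A A'] [Algebra R R'] [Algebra A R'] [Algebra A' R']
    [IsScalarTower A R R'] [IsScalarTower A A' R']
    [IsLocalization T A'] [IsLocalization (Algebra.algebraMapSubmonoid R T) R']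
    [Module R M'] [Module R' M'] [IsScalarTower R R' M']
    (g : M →ₗ[R] M') (hg : IsLocalizedModule (Algebra.algebraMapSubmonoid R T) g) :
    ExtendedFromAlg A' R' M' ↔
      Nonempty (Cok (G.map (algebraMap R R')) ≃ₗ[R']
        Cok (G.map (fun r => algebraMap R R' (algebraMap A R (ε r))))) := by
  have hle : Algebra.algebraMapSubmonoid R T ≤ T.comap ε := by
    rintro _ ⟨t, ht, rfl⟩
    change ε (algebraMap A R t) ∈ T
    rw [hε]; exact ht
  let e : R' →+* A' := IsLocalization.map A' ε hle
  have he : ∀ r, e (algebraMap R R' r) = algebraMap A A' (ε r) :=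
    fun r => IsLocalization.map_eq hle r
  have hee : ∀ a, e (algebraMap A' R' a) = a := by
    have : e.comp (algebraMap A' R') = RingHom.id A' := by
      apply IsLocalization.ringHom_ext T
      ext a
      simp only [RingHom.comp_apply, RingHom.id_apply]
      rw [← IsScalarTower.algebraMap_apply A A' R', IsScalarTower.algebraMap_apply A R R', he, hε]
    exact fun a => RingHom.congr_fun this a
  have hb : IsBaseChange R' g := 
    IsLocalizedModule.isBaseChange (Algebra.algebraMapSubmonoid R T) R' g
  obtain ⟨κ⟩ := cok_baseChange R R' G
  rw [extended_iff A' R' e hee (G.map (algebraMap R R')) M'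
    (hb.equiv.symm ≪≫ₗ LinearEquiv.baseChange R R' _ _ hM ≪≫ₗ κ)]
  have : (G.map (algebraMap R R')).map (fun r => algebraMap A' R' (e r)) =
      G.map (fun r => algebraMap R R' (algebraMap A R (ε r))) := by
    ext1 i j
    simp only [Matrix.map_apply, he]
    rw [← IsScalarTower.algebraMap_apply A A' R', IsScalarTower.algebraMap_apply A R R']
  rw [this]

lemma isLoc_congr {R R' : Type u} [CommRing R] [CommRing R'] [Algebra R R'] {S T : Submonoid R}
    (h : S = T) (hS : IsLocalization S R') : IsLocalization T R' := by
  subst h; exact hS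

lemma isLocMod_congr {R M M' : Type u} [CommRing R] [AddCommGroup M] [AddCommGroup M']
    [Module R M] [Module R M'] {g : M →ₗ[R] M'} {S T : Submonoid R}
    (h : S = T) (hS : IsLocalizedModule S g) : IsLocalizedModule T g := by
  subst h; exact hS

end QPG

theorem quillen_patching_graded
    (A : Type u) [CommRing A] [IsNoetherianRing A]
    (R : Type u) [CommRing R] [IsNoetherianRing R] [Algebra A R]
    (𝒜 : ℕ → Submodule A R) [GradedAlgebra 𝒜]
    (h0 : 𝒜 0 = LinearMap.range (Algebra.linearMap A R))
    (hinj : Function.Injective (algebraMap A R))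
    (M : Type u) [AddCommGroup M] [Module R M] [Module.FinitePresentation R M] :
    (∃ Idl : Ideal A, ∀ u : A, u ∈ Idl ↔ IsLocallyExtendedAway A R M u) ∧
    ((∀ 𝔭 : PrimeSpectrum A, IsLocallyExtendedAtPrime A R M 𝔭) →
      ExtendedFromAlg A R M) := by
  obtain ⟨ψ, hψ1, hψ0⟩ := QPG.exists_psi A R 𝒜 h0
  obtain ⟨ε, hε, hεA⟩ := QPG.exists_eps A R hinj ψ hψ0
  obtain ⟨n, m, G, ⟨hM⟩⟩ := QPG.exists_cok R M
  refine ⟨⟨(QPG.QI ψ G).radical, fun u => ⟨?_, ?_⟩⟩, ?_⟩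
  · rintro ⟨k, hk⟩ Aᵤ Rᵤ Mᵤ _ _ _ _ _ _ _ _ _ _ i2 _ _ _ g hg
    rw [← Algebra.algebraMapSubmonoid_powers] at hg
    have i3 : IsLocalization (Algebra.algebraMapSubmonoid R (Submonoid.powers u)) Rᵤ := by
      rw [Algebra.algebraMapSubmonoid_powers]; exact i2
    have i4 : IsLocalization (Submonoid.powers u) Aᵤ := inferInstance
    rw [QPG.extended_loc_iff ε hεA G M hM (Submonoid.powers u) Aᵤ Rᵤ Mᵤ g hg]
    refine QPG.equiv_of_mem_QI ψ hψ1 ε hε G Rᵤ _ hk ?_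
    rw [map_pow, map_pow]
    exact (IsLocalization.Away.algebraMap_isUnit (algebraMap A R u)).pow k
  · intro h
    let T := Submonoid.powers u
    let R' := Localization (Algebra.algebraMapSubmonoid R T)
    let M' := LocalizedModule (Algebra.algebraMapSubmonoid R T) M
    let g : M →ₗ[R] M' := LocalizedModule.mkLinearMap _ M
    have i2 : IsLocalization.Away (algebraMap A R u) R' :=
      QPG.isLoc_congr (Algebra.algebraMapSubmonoid_powers u) Localization.isLocalization
    have i1 : IsLocalization.Away u (Localization T) := Localization.isLocalization
    have hg : IsLocalizedModule (Algebra.algebraMapSubmonoid R T) g := inferInstance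
    have hg' := QPG.isLocMod_congr (Algebra.algebraMapSubmonoid_powers u) hg
    have := h (Localization T) R' M' g hg'
    rw [QPG.extended_loc_iff ε hεA G M hM T (Localization T) R' M' g hg] at this
    obtain ⟨f⟩ := this
    obtain ⟨_, ⟨k, rfl⟩, hc⟩ := QPG.mem_QI_of_loc ψ ε G T R' (QPG.MI_of_equiv f)
    exact ⟨k, hc⟩
  · intro h
    have htop : QPG.QI ψ G = ⊤ := by
      by_contra hne
      obtain ⟨P, hP, hle⟩ := Ideal.exists_le_maximal _ hne
      let 𝔭 : PrimeSpectrum A := ⟨P, hP.isPrime⟩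
      let T := 𝔭.asIdeal.primeCompl
      let R' := Localization (Algebra.algebraMapSubmonoid R T)
      let M' := LocalizedModule (Algebra.algebraMapSubmonoid R T) M
      let g : M →ₗ[R] M' := LocalizedModule.mkLinearMap _ M
      have i1 : IsLocalization.AtPrime (Localization T) 𝔭.asIdeal := Localization.isLocalization
      have hg : IsLocalizedModule (Algebra.algebraMapSubmonoid R T) g := inferInstance
      have := h 𝔭 (Localization T) R' M' g hg
      rw [QPG.extended_loc_iff ε hεA G M hM T (Localization T) R' M' g hg] at this
      obtain ⟨f⟩ := this
      obtain ⟨c, hcT, hc⟩ := QPG.mem_QI_of_loc ψ ε G T R' (QPG.MI_of_equiv f)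
      exact hcT (hle hc)
    rw [QPG.extended_iff A R ε hεA G M hM]
    have := QPG.equiv_of_mem_QI ψ hψ1 ε hε G R 1 (by rw [htop]; trivial) (by simp)
    have hid : G.map (algebraMap R R) = G := by ext1 i j; rfl
    rw [hid] at this
    exact this
end
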